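/- Let ψ be a Ma-Minda function such that ψ(𝔻) is a convex set. Let F(z) = z(1+z)/(1−z)³ = z + Σ_{n≥2} n² zⁿ, and suppose r ∈ (0, 1] is such that the function z ↦ F(rz)/r belongs to S*(ψ). If f, g ∈ S*(ψ), then the function z ↦ (f*g)(rz)/r belongs to S*(ψ); that is, the Hadamard product f*g belongs to S*(ψ) on |z| < r. -/

import Mathlib

open Complex Metric Set

noncomputable section

/-- The open unit disk in `ℂ`. -/
def 𝔻 : Set ℂ := Metric.ball 0 1

/-- The class `𝒜` of analytic functions on `𝔻` normalized by `f 0 = 0`, `f' 0 = 1`. -/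
def IsClassA (f : ℂ → ℂ) : Prop :=
  DifferentiableOn ℂ f 𝔻 ∧ f 0 = 0 ∧ deriv f 0 = 1

/-- `g` is subordinate to `F` on the unit disk. -/
def Subordinate (g F : ℂ → ℂ) : Prop :=
  ∃ ω : ℂ → ℂ, DifferentiableOn ℂ ω 𝔻 ∧ ω 0 = 0 ∧ (∀ z ∈ 𝔻, ω z ∈ 𝔻) ∧
    ∀ z ∈ 𝔻, g z = F (ω z)

/-- `ψ` is a Ma-Minda function: analytic and univalent on `𝔻`, `Re ψ > 0`, `ψ 0 = 1`,
`ψ' 0 > 0`, with real Taylor coefficients (expressed via `ψ (conj z) = conj (ψ z)`). -/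
def MaMinda (ψ : ℂ → ℂ) : Prop :=
  DifferentiableOn ℂ ψ 𝔻 ∧ Set.InjOn ψ 𝔻 ∧ (∀ z ∈ 𝔻, 0 < (ψ z).re) ∧
    ψ 0 = 1 ∧ 0 < (deriv ψ 0).re ∧ (deriv ψ 0).im = 0 ∧
    (∀ z ∈ 𝔻, ψ (starRingEnd ℂ z) = starRingEnd ℂ (ψ z))

/-- The Ma-Minda starlike class `S*(ψ)`. -/
def StarlikeMM (ψ f : ℂ → ℂ) : Prop :=
  IsClassA f ∧ (∀ z ∈ 𝔻, z ≠ 0 → f z ≠ 0) ∧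
    Subordinate (fun z => if z = 0 then 1 else z * deriv f z / f z) ψ

/-- The Ma-Minda convex class `C(ψ)`. -/
def ConvexMM (ψ f : ℂ → ℂ) : Prop :=
  IsClassA f ∧ (∀ z ∈ 𝔻, deriv f z ≠ 0) ∧
    Subordinate (fun z => 1 + z * deriv (deriv f) z / deriv f z) ψ

/-- `f` is starlike of order `α`. -/
def StarlikeOrder (α : ℝ) (f : ℂ → ℂ) : Prop :=
  IsClassA f ∧ (∀ z ∈ 𝔻, z ≠ 0 → f z ≠ 0) ∧
    ∀ z ∈ 𝔻, z ≠ 0 → α < (z * deriv f z / f z).re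

/-- `f` is a (normalized) convex function on `𝔻`. -/
def IsConvexFn (f : ℂ → ℂ) : Prop :=
  IsClassA f ∧ (∀ z ∈ 𝔻, deriv f z ≠ 0) ∧
    ∀ z ∈ 𝔻, 0 < (1 + z * deriv (deriv f) z / deriv f z).re



lemma minRe_closedBall {g : ℂ → ℂ} {r c : ℝ} (hr : 0 < r) (hg : DiffContOnCl ℂ g (ball 0 r))
    (h : ∀ z, ‖z‖ = r → c ≤ (g z).re) : ∀ z, ‖z‖ ≤ r → c ≤ (g z).re := by
  intro z hz
  have h1 : DiffContOnCl ℂ (fun z => Complex.exp (-(g z))) (ball 0 r) :=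
    (Complex.differentiable_exp.diffContOnCl (s := univ)).comp hg.neg (fun _ _ => mem_univ _)
  have h2 := Complex.norm_le_of_forall_mem_frontier_norm_le isBounded_ball h1 (C := Real.exp (-c))
    (by
      intro z hz
      rw [frontier_ball (0:ℂ) hr.ne'] at hz
      have := h z (by simpa using hz)
      rw [Complex.norm_exp]
      simpa using this) (z := z) (by rw [closure_ball (0:ℂ) hr.ne']; simpa using hz)
  rw [Complex.norm_exp] at h2
  simpa using h2

lemma minRe_pos {g : ℂ → ℂ} {r : ℝ} (hg : DifferentiableOn ℂ g (ball 0 r))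
    (h : ∀ z, ‖z‖ < r → 0 ≤ (g z).re) {a : ℂ} (ha : ‖a‖ < r) (hpos : 0 < (g a).re) :
    ∀ z, ‖z‖ < r → 0 < (g z).re := by
  intro z hz
  by_contra hcon
  have hz0 : (g z).re = 0 := le_antisymm (not_lt.1 hcon) (h z hz)
  have h1 : DifferentiableOn ℂ (fun z => Complex.exp (-(g z))) (ball 0 r) := hg.neg.cexp
  have hmax : IsMaxOn (norm ∘ fun z => Complex.exp (-(g z))) (ball 0 r) z := by
    intro y hy
    simp only [mem_ball, dist_zero_right] at hy
    have := h y hy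
    simp [Complex.norm_exp, hz0, this]
  have h2 := Complex.norm_eqOn_of_isPreconnected_of_isMaxOn
    (convex_ball (0:ℂ) r).isPreconnected isOpen_ball h1 (by simpa using hz) hmax
  have h3 := h2 (show a ∈ ball 0 r by simpa using ha)
  simp [Complex.norm_exp, hz0] at h3
  linarith

lemma log_exists {D : ℂ → ℂ} {R : ℝ} (hR : 0 < R) (hD : DifferentiableOn ℂ D (ball 0 R))
    (hne : ∀ z, ‖z‖ < R → D z ≠ 0) :
    ∃ L : ℂ → ℂ, ∀ z, ‖z‖ < R → HasDerivAt L (deriv D z / D z) z ∧ Complex.exp (L z) = D z := by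
  have hd : DifferentiableOn ℂ (fun z => deriv D z / D z) (ball 0 R) := by
    apply (hD.deriv isOpen_ball).div hD
    intro z hz; exact hne z (by simpa using hz)
  obtain ⟨L, hL0, hL⟩ := hd.isExactOn_ball.with_val_at 0 (Complex.log (D 0))
  refine ⟨L, fun z hz => ⟨hL z (by simpa using hz), ?_⟩⟩
  have hzz : z ∈ ball (0:ℂ) R := by simpa using hz
  have key : ∀ z ∈ ball (0:ℂ) R, HasDerivAt (fun z => D z * Complex.exp (-(L z))) 0 z := by
    intro z hz
    have h1 : HasDerivAt D (deriv D z) z := (hD.differentiableAt (isOpen_ball.mem_nhds hz)).hasDerivAt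
    have h2 := h1.mul (hL z hz).fun_neg.cexp
    refine h2.congr_deriv ?_
    have := hne z (by simpa using hz)
    field_simp; ring
  have h0 : (0:ℂ) ∈ ball (0:ℂ) R := by simpa using hR
  have hc := (convex_ball (0:ℂ) R).is_const_of_fderivWithin_eq_zero (𝕜 := ℂ)
    (f := fun z => D z * Complex.exp (-(L z)))
    (fun z hz => (key z hz).differentiableAt.differentiableWithinAt)
    (by
      intro z hz
      rw [fderivWithin_of_isOpen isOpen_ball hz]
      have := (key z hz).hasFDerivAt.fderiv
      rw [this]; ext; simp) hzz h0
  simp only [hL0] at hc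
  rw [Complex.exp_neg, Complex.exp_neg, Complex.exp_log (hne 0 (by simpa using hR)),
    mul_inv_cancel₀ (hne 0 (by simpa using hR))] at hc
  have := Complex.exp_ne_zero (L z)
  field_simp at hc
  exact hc.symm

/-- rotation parametrization -/
lemma exists_rot {y w : ℂ} (hw : w ≠ 0) (h : ‖y‖ = ‖w‖) :
    ∃ θ : ℝ, 0 ≤ θ ∧ θ ≤ 2 * Real.pi ∧ y = w * Complex.exp (θ * I) := by
  have h1 : ‖y / w‖ = 1 := by rw [norm_div, h, div_self (norm_ne_zero_iff.2 hw)]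
  obtain ⟨t, ht⟩ := (Complex.norm_eq_one_iff _).1 h1
  refine ⟨toIcoMod Real.two_pi_pos 0 t, ?_, ?_, ?_⟩
  · have := (toIcoMod_mem_Ico Real.two_pi_pos 0 t).1; simpa using this
  · have := (toIcoMod_mem_Ico Real.two_pi_pos 0 t).2; simpa using this.le
  · have h2 : y = w * Complex.exp (t * I) := by rw [ht]; field_simp
    rw [h2]; congr 1
    have h3 := self_sub_toIcoDiv_zsmul Real.two_pi_pos 0 t
    rw [← h3]
    rw [Complex.exp_eq_exp_iff_exists_int]
    refine ⟨toIcoDiv Real.two_pi_pos 0 t, ?_⟩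
    push_cast [zsmul_eq_mul]
    ring

lemma rot_hasDerivAt {L : ℂ → ℂ} {w : ℂ} {θ : ℝ} {L' : ℂ}
    (h : HasDerivAt L L' (w * Complex.exp (θ * I))) :
    HasDerivAt (fun t : ℝ => L (w * Complex.exp (t * I)))
      (L' * (w * Complex.exp (θ * I)) * I) θ := by
  have h1 : HasDerivAt (fun t : ℂ => w * Complex.exp (t * I))
      (w * (Complex.exp (θ * I) * (1 * I))) (θ : ℂ) :=
    (((hasDerivAt_id (θ:ℂ)).mul_const I).cexp).const_mul w
  have h2 := (HasDerivAt.comp (θ:ℂ) h h1).comp_ofReal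
  refine HasDerivAt.congr_deriv h2 ?_
  ring

lemma norm_rot (w : ℂ) (θ : ℝ) : ‖w * Complex.exp (θ * I)‖ = ‖w‖ := by
  simp [Complex.norm_exp_ofReal_mul_I]

lemma HasDerivAt.im_of {f : ℝ → ℂ} {f' : ℂ} {x : ℝ} (h : HasDerivAt f f' x) :
    HasDerivAt (fun t => (f t).im) f'.im x :=
  (Complex.imCLM.hasFDerivAt.comp_hasDerivAt x h)

lemma HasDerivAt.re_of {f : ℝ → ℂ} {f' : ℂ} {x : ℝ} (h : HasDerivAt f f' x) :
    HasDerivAt (fun t => (f t).re) f'.re x :=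
  (Complex.reCLM.hasFDerivAt.comp_hasDerivAt x h)

lemma exp_two_pi_rot (w : ℂ) : w * Complex.exp ((2 * Real.pi : ℝ) * I) = w := by
  push_cast; rw [Complex.exp_two_pi_mul_I, mul_one]

lemma mono_chi {L : ℂ → ℂ} {R : ℝ} {c : ℝ} (hL : DifferentiableOn ℂ L (ball 0 R))
    (h : ∀ z, ‖z‖ < R → -c < (z * deriv L z).re) {w : ℂ} (hw : ‖w‖ < R) :
    Monotone (fun θ : ℝ => (L (w * Complex.exp (θ * I)) - L w).im + c * θ) := by
  have hd : ∀ θ : ℝ, HasDerivAt (fun θ : ℝ => (L (w * Complex.exp (θ * I)) - L w).im + c * θ)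
      ((w * Complex.exp (θ * I) * deriv L (w * Complex.exp (θ * I))).re + c) θ := by
    intro θ
    have hz : ‖w * Complex.exp (θ * I)‖ < R := by rw [norm_rot]; exact hw
    have h1 : HasDerivAt L _ (w * Complex.exp (θ * I)) :=
      (hL.differentiableAt (isOpen_ball.mem_nhds (by simpa using hz))).hasDerivAt
    have h2 := ((rot_hasDerivAt h1).sub_const (L w)).im_of.add ((hasDerivAt_id θ).const_mul c)
    refine HasDerivAt.congr_deriv h2 ?_
    rw [mul_one, mul_comm (deriv L _)]
    simp [Complex.mul_im]
  apply monotone_of_deriv_nonneg (fun θ => (hd θ).differentiableAt)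
  intro θ
  rw [(hd θ).deriv]
  have := h (w * Complex.exp (θ * I)) (by rw [norm_rot]; exact hw)
  linarith

lemma lemmaB {L : ℂ → ℂ} {R : ℝ} (hL : DifferentiableOn ℂ L (ball 0 R))
    (h : ∀ z, ‖z‖ < R → -(1/2:ℝ) < (z * deriv L z).re) {y w : ℂ} (hw : ‖w‖ < R) (hw0 : w ≠ 0)
    (hyw : ‖y‖ = ‖w‖) : 0 ≤ (Complex.exp (L y - L w) * (1 - y / w)).re := by
  obtain ⟨θ, h0, h1, rfl⟩ := exists_rot hw0 hyw
  have hm := mono_chi hL h hw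
  have a0 := hm h0
  have a1 := hm h1
  simp only [exp_two_pi_rot] at a1
  simp at a0 a1
  set χ := (L (w * Complex.exp (θ * I))).im - (L w).im + 2⁻¹ * θ with hχ
  have hs : 0 ≤ Real.sin χ := Real.sin_nonneg_of_nonneg_of_le_pi (by linarith) (by linarith)
  have hs2 : 0 ≤ Real.sin (θ/2) := Real.sin_nonneg_of_nonneg_of_le_pi (by linarith) (by linarith)
  have e1 : Complex.exp (L (w * Complex.exp (θ * I)) - L w) * (1 - w * Complex.exp (θ * I) / w)
      = ((Real.exp (L (w * Complex.exp (θ * I)) - L w).re * (2 * Real.sin (θ/2)) : ℝ) : ℂ)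
        * (-I * Complex.exp (χ * I)) := by
    rw [mul_div_cancel_left₀ _ hw0]
    set D := L (w * Complex.exp (θ * I)) - L w with hD
    have hD' : D = (D.re : ℂ) + (χ - θ/2 : ℝ) * I := by
      apply Complex.ext <;> simp [hχ, hD]; ring
    have e2 : (1:ℂ) - Complex.exp (θ * I) = Complex.exp ((θ/2:ℝ) * I) * (-I) * (2 * Complex.sin (θ/2:ℝ)) := by
      have : (θ:ℂ) * I = (θ/2:ℝ) * I + (θ/2:ℝ) * I := by push_cast; ring
      rw [this, Complex.exp_add, Complex.sin]
      rw [neg_mul (↑(θ/2:ℝ) : ℂ) I, Complex.exp_neg]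
      have := Complex.exp_ne_zero ((θ/2:ℝ)*I)
      field_simp
      ring_nf; simp; ring
    rw [e2]; conv_lhs => rw [hD']
    push_cast
    have : (χ:ℂ) * I = (χ - θ/2) * I + (θ/2) * I := by ring
    rw [this, Complex.exp_add, Complex.exp_add]; ring
  rw [e1, Complex.re_ofReal_mul]
  have : (-I * Complex.exp (χ * I)).re = Real.sin χ := by
    simp [Complex.exp_ofReal_mul_I_re, Complex.exp_ofReal_mul_I_im]
  rw [this]
  positivity

lemma lemmaAconv {f L : ℂ → ℂ} {R : ℝ} (hL : DifferentiableOn ℂ L (ball 0 R))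
    (h : ∀ z, ‖z‖ < R → -(1:ℝ) < (z * deriv L z).re)
    (hf : ∀ z, ‖z‖ < R → HasDerivAt f (Complex.exp (L z)) z)
    {y w : ℂ} (hy : ‖y‖ < R) (hy0 : y ≠ 0) (hyw : ‖y‖ = ‖w‖) :
    0 ≤ ((f y - f w) / (y * Complex.exp (L y))).re := by
  obtain ⟨θ, h0, h1, rfl⟩ := exists_rot hy0 hyw.symm
  have hm := mono_chi hL h hy
  simp only [one_mul] at hm
  set χ : ℝ → ℝ := fun θ => (L (y * Complex.exp (θ * I)) - L y).im + θ with hχ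
  set u : ℝ → ℝ := fun t => ((f y - f (y * Complex.exp (t * I))) / (y * Complex.exp (L y))).re with hu
  have c0 : χ 0 = 0 := by simp [hχ]
  have c1 : χ (2 * Real.pi) = 2 * Real.pi := by simp only [hχ, exp_two_pi_rot]; simp
  have u0 : u 0 = 0 := by simp [hu]
  have u1 : u (2 * Real.pi) = 0 := by simp only [hu, exp_two_pi_rot]; simp
  have hd : ∀ t : ℝ, HasDerivAt u
      (Real.exp (L (y * Complex.exp (t * I)) - L y).re * Real.sin (χ t)) t := by
    intro t
    have hz : ‖y * Complex.exp (t * I)‖ < R := by rw [norm_rot]; exact hy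
    have h2 := (((rot_hasDerivAt (hf _ hz)).const_sub (f y)).div_const (y * Complex.exp (L y))).re_of
    refine HasDerivAt.congr_deriv h2 ?_
    symm
    set D := L (y * Complex.exp (t * I)) - L y with hD
    have hD' : D = (D.re : ℂ) + (χ t - t : ℝ) * I := by
      apply Complex.ext <;> simp [hχ, hD]
    have : -(Complex.exp (L (y * Complex.exp (t * I))) * (y * Complex.exp (t * I)) * I) /
        (y * Complex.exp (L y)) = (Real.exp D.re : ℂ) * (-I * Complex.exp (χ t * I)) := by
      have e3 : L (y * Complex.exp (t * I)) = D + L y := by rw [hD]; ring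
      rw [e3, Complex.exp_add]; conv_lhs => rw [hD']
      have : (χ t:ℂ) * I = (χ t - t) * I + t * I := by ring
      rw [this, Complex.exp_add, Complex.exp_add]
      have := Complex.exp_ne_zero (L y)
      push_cast
      field_simp
    rw [this, Complex.re_ofReal_mul]
    simp [Complex.exp_ofReal_mul_I_re, Complex.exp_ofReal_mul_I_im]
  have hc : Continuous u := continuous_iff_continuousAt.2 fun t => (hd t).continuousAt
  change 0 ≤ u θ
  rcases le_total (χ θ) Real.pi with hp | hp
  · have : MonotoneOn u (Icc 0 θ) := by
      apply monotoneOn_of_deriv_nonneg (convex_Icc _ _) hc.continuousOn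
        (fun t _ => (hd t).differentiableAt.differentiableWithinAt)
      intro t ht
      rw [interior_Icc] at ht
      rw [(hd t).deriv]
      have b0 : χ 0 ≤ χ t := hm ht.1.le
      have b1 : χ t ≤ χ θ := hm ht.2.le
      have := Real.sin_nonneg_of_nonneg_of_le_pi (x := χ t) (by linarith) (by linarith)
      positivity
    rw [← u0]
    exact this ⟨le_rfl, h0⟩ ⟨h0, le_rfl⟩ h0
  · have : AntitoneOn u (Icc θ (2 * Real.pi)) := by
      apply antitoneOn_of_deriv_nonpos (convex_Icc _ _) hc.continuousOn
        (fun t _ => (hd t).differentiableAt.differentiableWithinAt)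
      intro t ht
      rw [interior_Icc] at ht
      rw [(hd t).deriv]
      have b0 : χ θ ≤ χ t := hm ht.1.le
      have b1 : χ t ≤ χ (2 * Real.pi) := hm ht.2.le
      have : 0 ≤ Real.sin (χ t - Real.pi) :=
        Real.sin_nonneg_of_nonneg_of_le_pi (by linarith) (by linarith)
      rw [Real.sin_sub_pi] at this
      have e := Real.exp_pos (L (y * Complex.exp (t * I)) - L y).re
      nlinarith
    rw [← u1]
    exact this ⟨le_rfl, h1⟩ ⟨h1, le_rfl⟩ h1


lemma lemmaHP {L : ℂ → ℂ} {R t : ℝ} (hL : DifferentiableOn ℂ L (ball 0 R))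
    (h : ∀ z, ‖z‖ < R → -(1/2:ℝ) < (z * deriv L z).re) (ht : 0 < t) (htR : t < R)
    {z b : ℂ} (hz : ‖z‖ < t) (hb : ‖b‖ < t) :
    0 < (Complex.exp (L z + (starRingEnd ℂ) (L b)) * (1 - (starRingEnd ℂ) b * z / t^2)).re := by
  have htC : (t:ℂ) ≠ 0 := by exact_mod_cast ht.ne'
  have hdiff : ∀ b : ℂ, DifferentiableOn ℂ (fun z => Complex.exp (L z + (starRingEnd ℂ) (L b)) *
      (1 - (starRingEnd ℂ) b * z / t^2)) (ball 0 R) := by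
    intro b
    apply ((hL.add_const _).cexp).mul
    apply DifferentiableOn.const_sub
    fun_prop
  have hsub : closedBall (0:ℂ) t ⊆ ball 0 R := closedBall_subset_ball htR
  have s0 : ∀ z b : ℂ, ‖z‖ = t → ‖b‖ = t →
      0 ≤ (Complex.exp (L z + (starRingEnd ℂ) (L b)) * (1 - (starRingEnd ℂ) b * z / t^2)).re := by
    intro z b hz hb
    have hb0 : b ≠ 0 := by rintro rfl; simp at hb; linarith
    have h1 := lemmaB hL h (y := z) (w := b) (by linarith) hb0 (by rw [hz, hb])
    have e1 : (starRingEnd ℂ) b * z / t^2 = z / b := by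
      have : (starRingEnd ℂ) b * b = t^2 := by
        rw [Complex.conj_mul', hb]
      field_simp
      linear_combination z * this
    have e2 : Complex.exp (L z + (starRingEnd ℂ) (L b)) =
        (Real.exp (2 * (L b).re) : ℂ) * Complex.exp (L z - L b) := by
      push_cast
      rw [← Complex.exp_add]
      congr 1
      have := Complex.add_conj (L b)
      push_cast at this
      linear_combination this
    rw [e1, e2, mul_assoc, Complex.re_ofReal_mul]
    positivity
  have s1 : ∀ z b : ℂ, ‖z‖ ≤ t → ‖b‖ = t →
      0 ≤ (Complex.exp (L z + (starRingEnd ℂ) (L b)) * (1 - (starRingEnd ℂ) b * z / t^2)).re := by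
    intro z b hz hb
    exact minRe_closedBall ht ((hdiff b).diffContOnCl_ball hsub) (fun z hz => s0 z b hz hb) z hz
  have hsymm : ∀ z b : ℂ, (Complex.exp (L z + (starRingEnd ℂ) (L b)) *
      (1 - (starRingEnd ℂ) b * z / t^2)).re = (Complex.exp (L b + (starRingEnd ℂ) (L z)) *
      (1 - (starRingEnd ℂ) z * b / t^2)).re := by
    intro z b
    rw [← Complex.conj_re]
    congr 1
    simp [← Complex.exp_conj]
    rw [add_comm, mul_comm b]
  have s2 : ∀ z b : ℂ, ‖z‖ ≤ t → ‖b‖ ≤ t →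
      0 ≤ (Complex.exp (L z + (starRingEnd ℂ) (L b)) * (1 - (starRingEnd ℂ) b * z / t^2)).re := by
    intro z b hz hb
    rw [hsymm]
    exact minRe_closedBall ht ((hdiff z).diffContOnCl_ball hsub)
      (fun b hb => by rw [← hsymm]; exact s1 z b hz hb) b hb
  refine minRe_pos ((hdiff b).mono (ball_subset_ball htR.le)) (fun z hz => s2 z b hz.le hb.le) hb
    ?_ z hz
  have e2 : Complex.exp (L b + (starRingEnd ℂ) (L b)) = (Real.exp (2 * (L b).re) : ℂ) := by
      push_cast
      congr 1
      have := Complex.add_conj (L b)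
      push_cast at this
      exact this
  have e1 : (1 - (starRingEnd ℂ) b * b / t^2 : ℂ) = ((1 - ‖b‖^2/t^2 : ℝ) : ℂ) := by
    rw [Complex.conj_mul']; push_cast; rfl
  rw [e1, e2, Complex.re_ofReal_mul, Complex.ofReal_re]
  have : ‖b‖^2/t^2 < 1 := by
    rw [div_lt_one (by positivity)]
    gcongr
  have := Real.exp_pos (2 * (L b).re)
  apply mul_pos this; linarith

lemma lemmaHP' {L : ℂ → ℂ} {R t : ℝ} (hL : DifferentiableOn ℂ L (ball 0 R))
    (h : ∀ z, ‖z‖ < R → -(1/2:ℝ) < (z * deriv L z).re) (ht : 0 < t) (htR : t < R)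
    {x : ℂ} (hx : ‖x‖ < t⁻¹) :
    ∃ c : ℂ, ∀ z, ‖z‖ < t → 0 < (c * ((1 + x * z) * Complex.exp (L z))).re := by
  have htC : (t:ℂ) ≠ 0 := by exact_mod_cast ht.ne'
  set b : ℂ := -(starRingEnd ℂ) x * t^2 with hb
  refine ⟨Complex.exp ((starRingEnd ℂ) (L b)), fun z hz => ?_⟩
  have hbt : ‖b‖ < t := by
    rw [hb]
    simp
    calc ‖x‖ * t^2 < t⁻¹ * t^2 := by gcongr
      _ = t := by field_simp
  have := lemmaHP hL h ht htR hz hbt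
  convert this using 2
  rw [Complex.exp_add]
  have : (starRingEnd ℂ) b * z / t^2 = - x * z := by
    simp [hb]; field_simp
  rw [this]; ring

abbrev AA (s : ℝ) := C(closedBall (0:ℂ) s, ℂ)

def XX (s : ℝ) : AA s := ⟨fun ζ => (ζ : ℂ), continuous_subtype_val⟩

def uu (s : ℝ) (y : ℂ) : AA s := Ring.inverse (1 - y • XX s)

open Classical in
def toA (s : ℝ) (v : ℂ → ℂ) : AA s :=
  if h : ContinuousOn v (closedBall 0 s) then ⟨fun ζ => v ζ, h.domRestrict⟩ else 0

lemma toA_apply {s : ℝ} {v : ℂ → ℂ} (h : ContinuousOn v (closedBall 0 s)) (ζ : closedBall (0:ℂ) s) :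
    toA s v ζ = v ζ := by
  rw [toA, dif_pos h]; rfl

lemma norm_XX_le {s : ℝ} (hs : 0 < s) : ‖XX s‖ ≤ s := by
  rw [ContinuousMap.norm_le _ hs.le]
  intro ζ
  exact mem_closedBall_zero_iff.1 ζ.2

lemma norm_smul_XX_lt {s : ℝ} (hs : 0 < s) {y : ℂ} (hy : ‖y‖ < s⁻¹) : ‖y • XX s‖ < 1 := by
  rw [norm_smul]
  calc ‖y‖ * ‖XX s‖ ≤ ‖y‖ * s := by gcongr; exact norm_XX_le hs
    _ < s⁻¹ * s := by gcongr
    _ = 1 := by field_simp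

lemma mul_uu {s : ℝ} (hs : 0 < s) {y : ℂ} (hy : ‖y‖ < s⁻¹) : (1 - y • XX s) * uu s y = 1 := by
  exact Ring.mul_inverse_cancel _ (Units.oneSub _ (norm_smul_XX_lt hs hy)).isUnit

lemma uu_apply {s : ℝ} (hs : 0 < s) {y : ℂ} (hy : ‖y‖ < s⁻¹) (ζ : closedBall (0:ℂ) s) :
    uu s y ζ = (1 - y * ζ)⁻¹ := by
  have h := congrArg (fun v : AA s => v ζ) (mul_uu hs hy)
  simp [XX] at h
  exact eq_inv_of_mul_eq_one_right h

lemma uu_zero (s : ℝ) : uu s 0 = 1 := by simp [uu]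

lemma hasDerivAt_uu {s : ℝ} (hs : 0 < s) {y : ℂ} (hy : ‖y‖ < s⁻¹) :
    HasDerivAt (uu s) (XX s * uu s y ^ 2) y := by
  have h1 : HasDerivAt (fun y : ℂ => 1 - y • XX s) (-((1:ℂ) • XX s)) y :=
    ((hasDerivAt_id y).smul_const (XX s)).const_sub 1
  have h2 := hasFDerivAt_ringInverse (𝕜 := ℂ) (Units.oneSub _ (norm_smul_XX_lt hs hy))
  have h3 := h2.comp_hasDerivAt y h1
  refine HasDerivAt.congr_deriv h3 ?_
  have e : uu s y = ((Units.oneSub (y • XX s) (norm_smul_XX_lt hs hy))⁻¹ : (AA s)ˣ) :=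
    NormedRing.inverse_one_sub _ _
  rw [e]
  simp
  ring

lemma continuousOn_uu {s : ℝ} (hs : 0 < s) : ContinuousOn (uu s) (ball 0 s⁻¹) :=
  fun _ hy => (hasDerivAt_uu hs (by simpa using hy)).continuousAt.continuousWithinAt

open Real in
lemma schwarz_pt {p : ℂ → ℂ} {t : ℝ} (ht : 0 < t) (ht1 : t < 1)
    (hp : DifferentiableOn ℂ p (ball 0 1)) {ζ : ℂ} (hζ : ‖ζ‖ < t) :
    circleAverage (fun η => ((p η).re : ℂ) * (2 * (1 - η⁻¹ * ζ)⁻¹ - 1)) 0 t + I * (p 0).im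
      = p ζ := by
  have habs : |t| = t := abs_of_pos ht
  have htC : (t:ℂ) ≠ 0 := by exact_mod_cast ht.ne'
  have hpd : DiffContOnCl ℂ p (ball 0 |t|) := by
    rw [habs]; exact hp.diffContOnCl_ball (closedBall_subset_ball ht1)
  have hpc : ContinuousOn p (sphere 0 |t|) := hp.continuousOn.mono (by
    rw [habs]; exact sphere_subset_closedBall.trans (closedBall_subset_ball ht1))
  have hne : ∀ η ∈ sphere (0:ℂ) |t|, η - ζ ≠ 0 := by
    intro η hη h
    rw [habs] at hη
    have : ‖η‖ = t := by simpa using hη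
    rw [sub_eq_zero.1 h] at this; linarith
  have hne0 : ∀ η ∈ sphere (0:ℂ) |t|, η ≠ 0 := by
    intro η hη h
    rw [habs] at hη
    have : ‖η‖ = t := by simpa using hη
    rw [h] at this; simp at this; linarith
  have hkc : ContinuousOn (fun η : ℂ => ((η - 0) / (η - ζ))) (sphere 0 |t|) := by
    apply ContinuousOn.div (by fun_prop) (by fun_prop) hne
  have hcp : ContinuousOn (fun η => (starRingEnd ℂ) (p η)) (sphere 0 |t|) :=
    Complex.continuous_conj.comp_continuousOn hpc
  -- first
  have S1 : circleAverage (fun η => p η * (2 * ((η - 0) / (η - ζ)) - 1)) 0 t = 2 * p ζ - p 0 := by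
    have : (fun η => p η * (2 * ((η - 0) / (η - ζ)) - 1)) =
        fun η => (2:ℂ) • (((η - 0) / (η - ζ)) • p η) - p η := by
      ext η; simp only [smul_eq_mul]; ring
    rw [this, circleAverage_fun_sub, circleAverage_fun_smul,
      hpd.circleAverage_smul_div (by rw [habs]; simpa using hζ), hpd.circleAverage]
    · rfl
    · exact ((hkc.smul hpc).const_smul (2:ℂ)).circleIntegrable'
    · exact hpc.circleIntegrable'
  have hζ2 : ∀ η : ℂ, ‖η‖ ≤ t → (t:ℂ)^2 - (starRingEnd ℂ) ζ * η ≠ 0 := by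
    intro η hη h
    have h1 : (t:ℂ)^2 = (starRingEnd ℂ) ζ * η := sub_eq_zero.1 h
    have h2 := congrArg norm h1
    simp at h2
    have : ‖ζ‖ * ‖η‖ < t ^ 2 := by
      calc ‖ζ‖ * ‖η‖ ≤ ‖ζ‖ * t := by gcongr
        _ < t * t := by gcongr
        _ = t^2 := by ring
    linarith
  have S2' : circleAverage (fun η => p η * (2 * (t^2 / (t^2 - (starRingEnd ℂ) ζ * η)) - 1)) 0 t
      = p 0 := by
    have hd : DiffContOnCl ℂ (fun η => p η * (2 * (t^2 / (t^2 - (starRingEnd ℂ) ζ * η)) - 1))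
        (ball 0 |t|) := by
      have hh : DifferentiableOn ℂ (fun η:ℂ => (2 * ((t:ℂ)^2 / (t^2 - (starRingEnd ℂ) ζ * η)) - 1))
        (closedBall 0 |t|) := by
        apply DifferentiableOn.sub_const
        apply DifferentiableOn.const_mul
        apply DifferentiableOn.div (by fun_prop) (by fun_prop)
        intro η hη; exact hζ2 η (by simpa [habs] using hη)
      exact hpd.smul (hh.diffContOnCl_ball subset_rfl)
    rw [hd.circleAverage]
    simp [htC]; ring
  have S2 : circleAverage (fun η => (starRingEnd ℂ) (p η) * (2 * ((η - 0) / (η - ζ)) - 1)) 0 t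
      = (starRingEnd ℂ) (p 0) := by
    rw [← S2']
    have hi : CircleIntegrable (fun η => p η * (2 * (t^2 / (t^2 - (starRingEnd ℂ) ζ * η)) - 1)) 0 t := by
      apply ContinuousOn.circleIntegrable'
      apply hpc.mul
      apply ContinuousOn.sub _ continuousOn_const
      apply ContinuousOn.mul continuousOn_const
      apply ContinuousOn.div (by fun_prop) (by fun_prop)
      intro η hη; rw [habs] at hη; exact hζ2 η (by simpa using (mem_sphere_iff_norm.1 hη).le)
    have := (Complex.conjCLE : ℂ →L[ℝ] ℂ).circleAverage_comp_comm hi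
    simp only [ContinuousLinearEquiv.coe_coe, Complex.conjCLE_apply] at this
    rw [← this]
    apply circleAverage_congr_sphere
    intro η hη
    have hη0 := hne0 η hη
    have hη1 := hne η hη
    have hn : ‖η‖ = t := by rw [habs] at hη; simpa using hη
    have e1 : (starRingEnd ℂ) η * η = t^2 := by rw [Complex.conj_mul', hn]
    have e2 : (starRingEnd ℂ) η ≠ 0 := by simpa using hη0
    simp only [Function.comp, map_mul, map_sub, map_div₀, map_one, map_pow, Complex.conj_conj,
      Complex.conj_ofReal, sub_zero, Complex.conjCLE_apply]
    have e3 : (2:ℂ) = (starRingEnd ℂ) 2 := (Complex.conj_ofNat 2).symm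
    rw [← e3]
    congr 3
    rw [← e1, show (starRingEnd ℂ) η * η - ζ * (starRingEnd ℂ) η = (starRingEnd ℂ) η * (η - ζ) by ring]
    field_simp
  have E : circleAverage (fun η => ((p η).re : ℂ) * (2 * (1 - η⁻¹ * ζ)⁻¹ - 1)) 0 t =
      circleAverage (fun η => (1/2:ℂ) • (p η * (2 * ((η - 0) / (η - ζ)) - 1) +
        (starRingEnd ℂ) (p η) * (2 * ((η - 0) / (η - ζ)) - 1))) 0 t := by
    apply circleAverage_congr_sphere
    intro η hη
    have hη0 := hne0 η hη
    have hη1 := hne η hη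
    have e0 := Complex.add_conj (p η)
    have e1 : (1 - η⁻¹ * ζ)⁻¹ = (η - 0) / (η - ζ) := by
      have : 1 - η⁻¹ * ζ = (η - ζ) / η := by field_simp
      rw [this, inv_div, sub_zero]
    simp only [e1, smul_eq_mul]
    push_cast at e0
    linear_combination (- (1/2) * (2 * ((η - 0) / (η - ζ)) - 1)) * e0
  have hk2 : ContinuousOn (fun η : ℂ => (2 * ((η - 0) / (η - ζ)) - 1)) (sphere 0 |t|) :=
    (continuousOn_const.mul hkc).sub continuousOn_const
  rw [E, circleAverage_fun_smul, circleAverage_fun_add, S1, S2, smul_eq_mul]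
  · have e0 := Complex.sub_conj (p 0)
    push_cast at e0
    linear_combination (-1/2) * e0
  · exact (hpc.mul hk2).circleIntegrable'
  · exact (hcp.mul hk2).circleIntegrable'

open Real in
lemma schwarz_A {p : ℂ → ℂ} {s t : ℝ} (hs : 0 < s) (hst : s < t) (ht1 : t < 1)
    (hp : DifferentiableOn ℂ p (ball 0 1)) :
    CircleIntegrable (fun η => ((p η).re : ℂ) • ((2:ℂ) • uu s η⁻¹ - 1)) 0 t ∧
    toA s p = circleAverage (fun η => ((p η).re : ℂ) • ((2:ℂ) • uu s η⁻¹ - 1)) 0 t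
      + (I * (p 0).im) • (1 : AA s) := by
  have ht : 0 < t := hs.trans hst
  have habs : |t| = t := abs_of_pos ht
  have hpc : ContinuousOn p (sphere 0 |t|) := hp.continuousOn.mono (by
    rw [habs]; exact sphere_subset_closedBall.trans (closedBall_subset_ball ht1))
  have hinv : ∀ η ∈ sphere (0:ℂ) |t|, ‖η⁻¹‖ < s⁻¹ := by
    intro η hη
    rw [habs] at hη
    have : ‖η‖ = t := by simpa using hη
    rw [norm_inv, this]
    gcongr
  have huc : ContinuousOn (fun η : ℂ => uu s η⁻¹) (sphere 0 |t|) := by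
    apply (continuousOn_uu hs).comp
    · apply continuousOn_inv₀.mono
      intro η hη h0
      rw [habs] at hη
      have : ‖η‖ = t := by simpa using hη
      rw [h0] at this; simp at this; linarith
    · intro η hη; simpa using hinv η hη
  have hI : CircleIntegrable (fun η => ((p η).re : ℂ) • ((2:ℂ) • uu s η⁻¹ - 1)) 0 t := by
    apply ContinuousOn.circleIntegrable'
    apply ContinuousOn.fun_smul
    · exact (Complex.continuous_ofReal.comp Complex.continuous_re).comp_continuousOn hpc
    · exact (huc.const_smul (2:ℂ)).sub continuousOn_const
  refine ⟨hI, ?_⟩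
  ext ζ
  have hζ : ‖(ζ:ℂ)‖ ≤ s := mem_closedBall_zero_iff.1 ζ.2
  have hcont : ContinuousOn p (closedBall 0 s) :=
    hp.continuousOn.mono (closedBall_subset_ball (hst.trans ht1))
  rw [toA_apply hcont, ← schwarz_pt ht ht1 hp (hζ.trans_lt hst)]
  have := ((ContinuousMap.evalCLM ℝ ζ : AA s →L[ℝ] ℂ)).circleAverage_comp_comm hI
  simp only [ContinuousMap.evalCLM_apply] at this
  rw [ContinuousMap.add_apply, ← this]
  congr 1
  · apply circleAverage_congr_sphere
    intro η hη
    simp [uu_apply hs (hinv η hη)]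
  · simp

open Real in
lemma lemmaC {s t : ℝ} (hs : 0 < s) (hst : s < t) (ht1 : t < 1) (μ : AA s →L[ℂ] ℂ) (h1 : μ 1 ≠ 0)
    (hμ : ∀ w, ‖w‖ = t⁻¹ → 1/2 ≤ (μ (uu s w) / μ 1).re) {p : ℂ → ℂ}
    (hp : DifferentiableOn ℂ p (ball 0 1)) (hpos : ∀ z, ‖z‖ = t → 0 < (p z).re) :
    0 < (μ (toA s p) / μ 1).re := by
  have ht : 0 < t := hs.trans hst
  have habs : |t| = t := abs_of_pos ht
  have hpc : ContinuousOn p (sphere 0 t) := hp.continuousOn.mono 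
    (sphere_subset_closedBall.trans (closedBall_subset_ball ht1))
  obtain ⟨η0, hη0, hmin⟩ := (isCompact_sphere (0:ℂ) t).exists_isMinOn
    (NormedSpace.sphere_nonempty.2 ht.le) (Complex.continuous_re.comp_continuousOn hpc)
  set δ := (p η0).re with hδ
  have hδ0 : 0 < δ := hpos _ (by simpa using hη0)
  let φ : AA s →L[ℝ] ℝ := Complex.reCLM.comp (((μ 1)⁻¹ • μ).restrictScalars ℝ)
  have hφ : ∀ v, φ v = (μ v / μ 1).re := by
    intro v
    simp only [φ, ContinuousLinearMap.comp_apply, Complex.reCLM_apply]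
    congr 1
    simp [div_eq_inv_mul]
  have hφs : ∀ (x : ℝ) v, φ ((x:ℂ) • v) = x * φ v := by
    intro x v
    rw [hφ, hφ, map_smul, smul_eq_mul, mul_div_assoc, Complex.re_ofReal_mul]
  have hφi : ∀ (x : ℝ), φ ((I * x : ℂ) • 1) = 0 := by
    intro x
    rw [hφ, map_smul, smul_eq_mul, mul_div_assoc, div_self h1]
    simp
  have hφ1 : φ 1 = 1 := by rw [hφ, div_self h1]; simp
  have hK : ∀ η ∈ sphere (0:ℂ) t, 0 ≤ φ ((2:ℂ) • uu s η⁻¹ - 1) := by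
    intro η hη
    have hh : (2:ℂ) = ((2:ℝ):ℂ) := by norm_num
    rw [map_sub, hφ1, hh, hφs, hφ]
    have := hμ η⁻¹ (by rw [norm_inv]; congr 1; simpa using hη)
    linarith
  obtain ⟨i1, e1⟩ := schwarz_A hs hst ht1 hp
  obtain ⟨i2, e2⟩ := schwarz_A (p := fun _ => (δ:ℂ)) hs hst ht1 (differentiableOn_const _)
  have hδA : toA s (fun _ => (δ:ℂ)) = (δ:ℂ) • (1 : AA s) := by
    ext ζ; rw [toA_apply continuousOn_const]; simp
  rw [← hφ, e1, map_add, hφi, add_zero, ← φ.circleAverage_comp_comm i1]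
  have f2 : φ (toA s (fun _ => (δ:ℂ))) = δ := by rw [hδA, hφs, hφ1, mul_one]
  rw [e2, map_add, hφi, add_zero, ← φ.circleAverage_comp_comm i2] at f2
  refine hδ0.trans_le (le_of_eq_of_le f2.symm ?_)
  have ii : ∀ {F : ℂ → AA s}, CircleIntegrable F 0 t → CircleIntegrable (φ ∘ F) 0 t := by
    intro F hF
    have := φ.integrable_comp hF.1
    constructor
    · exact φ.integrable_comp hF.1
    · exact φ.integrable_comp hF.2
  apply circleAverage_mono (ii i2) (ii i1)
  intro η hη
  rw [habs] at hη
  simp only [Function.comp, hφs, Complex.ofReal_re]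
  have : δ ≤ (p η).re := hmin hη
  exact mul_le_mul_of_nonneg_right this (hK η hη)

lemma lemmaD {s t : ℝ} (hs : 0 < s) (hst : s < t) (ht1 : t < 1) (μ : AA s →L[ℂ] ℂ) (h1 : μ 1 ≠ 0)
    (hμ : ∀ w, ‖w‖ = t⁻¹ → 1/2 ≤ (μ (uu s w) / μ 1).re) {L : ℂ → ℂ}
    (hL : DifferentiableOn ℂ L (ball 0 1))
    (h : ∀ z, ‖z‖ < 1 → -(1/2:ℝ) < (z * deriv L z).re) {x : ℂ} (hx : ‖x‖ < t⁻¹) :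
    μ ((1 + x • XX s) * toA s (fun z => Complex.exp (L z))) ≠ 0 := by
  have ht : 0 < t := hs.trans hst
  obtain ⟨t', h1', h2'⟩ : ∃ t', t < t' ∧ t' < 1 ∧ ‖x‖ < t'⁻¹ := by
    rcases eq_or_ne x 0 with rfl | hx0
    · refine ⟨(t+1)/2, by linarith, by linarith, ?_⟩
      simp; linarith
    · have hx1 : 0 < ‖x‖ := norm_pos_iff.2 hx0
      have : t < min 1 ‖x‖⁻¹ := lt_min ht1 ((lt_inv_comm₀ ht hx1).2 hx)
      obtain ⟨t', a, b⟩ := exists_between this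
      refine ⟨t', a, b.trans_le (min_le_left _ _), ?_⟩
      exact (lt_inv_comm₀ (ht.trans a) hx1).1 (b.trans_le (min_le_right _ _))
  obtain ⟨c, hc⟩ := lemmaHP' hL h (ht.trans h1') h2'.1 h2'.2
  have hd : DifferentiableOn ℂ (fun z => c * ((1 + x * z) * Complex.exp (L z))) (ball 0 1) := by
    apply DifferentiableOn.const_mul
    apply DifferentiableOn.mul (by fun_prop) hL.cexp
  have := lemmaC hs hst ht1 μ h1 hμ hd (fun z hz => hc z (by rw [hz]; exact h1'))
  intro h0
  have e : toA s (fun z => c * ((1 + x * z) * Complex.exp (L z))) =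
      c • ((1 + x • XX s) * toA s (fun z => Complex.exp (L z))) := by
    have hsub : closedBall (0:ℂ) s ⊆ ball 0 1 := closedBall_subset_ball (hst.trans ht1)
    ext ζ
    rw [toA_apply (hd.continuousOn.mono hsub)]
    simp [toA_apply (hL.cexp.continuousOn.mono hsub), XX]
  rw [e, map_smul, h0] at this
  simp at this


lemma half_closed {φ : ℂ → ℝ} {w : ℂ} {c : ℝ} (hc : ContinuousAt φ w) (hw : w ≠ 0)
    (h : ∀ y, ‖y‖ = ‖w‖ → y ≠ w → c ≤ φ y) : c ≤ φ w := by
  have ht : Filter.Tendsto (fun θ : ℝ => w * Complex.exp (θ * I)) (nhdsWithin 0 (Ioi 0)) (nhds w) := by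
    have h1 : Continuous (fun θ : ℝ => w * Complex.exp (θ * I)) := by fun_prop
    have h2 := h1.tendsto 0
    simp at h2
    exact h2.mono_left nhdsWithin_le_nhds
  refine ge_of_tendsto (hc.tendsto.comp ht) ?_
  filter_upwards [Ioo_mem_nhdsGT Real.pi_pos] with θ hθ
  apply h _ (norm_rot w θ)
  intro he
  have h1 : Complex.exp (θ * I) = 1 := by
    apply mul_left_cancel₀ hw; rw [he, mul_one]
  have h2 := congrArg Complex.im h1
  rw [Complex.exp_ofReal_mul_I_im] at h2
  have := Real.sin_pos_of_pos_of_lt_pi hθ.1 hθ.2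
  simp at h2; linarith

lemma sphere_conj {y w : ℂ} (hyw : ‖y‖ = ‖w‖) :
    (starRingEnd ℂ) y * y = (starRingEnd ℂ) w * w := by
  rw [Complex.conj_mul', Complex.conj_mul', hyw]

lemma re_half {y w : ℂ} (hyw : ‖y‖ = ‖w‖) (hne : y ≠ w) : (y / (y - w)).re = 1/2 := by
  have h1 := sphere_conj hyw
  have hs : y - w ≠ 0 := sub_ne_zero.2 hne
  have hs' : (starRingEnd ℂ) y - (starRingEnd ℂ) w ≠ 0 := by
    rw [← map_sub]; exact (map_ne_zero _).2 hs
  have h2 := Complex.add_conj (y / (y - w))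
  have h3 : y / (y - w) + (starRingEnd ℂ) (y / (y - w)) = 1 := by
    rw [map_div₀, map_sub]
    field_simp
    linear_combination h1
  rw [h3] at h2
  have h4 : (1:ℝ) = 2 * (y / (y - w)).re := by exact_mod_cast h2
  linarith

lemma neg_real {y w : ℂ} (hyw : ‖y‖ = ‖w‖) (hne : y ≠ w) :
    ∃ c : ℝ, 0 ≤ c ∧ w * y / (y - w)^2 = -(c:ℂ) := by
  refine ⟨‖w‖^2/‖y-w‖^2, by positivity, ?_⟩
  have h1 := sphere_conj hyw
  have hs : y - w ≠ 0 := sub_ne_zero.2 hne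
  have hs' : (starRingEnd ℂ) y - (starRingEnd ℂ) w ≠ 0 := by
    rw [← map_sub]; exact (map_ne_zero _).2 hs
  push_cast
  rw [← Complex.conj_mul', ← Complex.conj_mul', map_sub]
  field_simp
  linear_combination w * h1

lemma uu_resolvent {s : ℝ} (hs : 0 < s) {y w : ℂ} (hy : ‖y‖ < s⁻¹) (hw : ‖w‖ < s⁻¹) :
    (y - w) • (uu s y * uu s w) = y • uu s y - w • uu s w := by
  have h1 := mul_uu hs hy
  have h2 := mul_uu hs hw
  simp only [Algebra.smul_def] at *
  rw [map_sub]
  linear_combination (-(algebraMap ℂ (AA s) w) * uu s w) * h1 + (algebraMap ℂ (AA s) y * uu s y) * h2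

lemma uu_sq {s : ℝ} (hs : 0 < s) {y : ℂ} (hy : ‖y‖ < s⁻¹) :
    uu s y ^ 2 = uu s y + y • (XX s * uu s y ^ 2) := by
  have h1 := mul_uu hs hy
  simp only [Algebra.smul_def] at *
  linear_combination (uu s y) * h1

lemma uu_X {s : ℝ} (hs : 0 < s) {y : ℂ} (hy : ‖y‖ < s⁻¹) :
    y • (XX s * uu s y) = uu s y - 1 := by
  have h1 := mul_uu hs hy
  simp only [Algebra.smul_def] at *
  linear_combination -h1

lemma exists_t {s : ℝ} (hs : 0 < s) (hs1 : s < 1) {x y : ℂ} (hx : ‖x‖ < s⁻¹) (hy : ‖y‖ < s⁻¹) :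
    ∃ t, s < t ∧ t < 1 ∧ ‖x‖ < t⁻¹ ∧ ‖y‖ < t⁻¹ := by
  have h : max 1 (max ‖x‖ ‖y‖) < s⁻¹ := max_lt ((one_lt_inv₀ hs).2 hs1) (max_lt hx hy)
  obtain ⟨q, h1, h2⟩ := exists_between h
  have hq : 1 < q := (le_max_left _ _).trans_lt h1
  refine ⟨q⁻¹, ?_, ?_, ?_, ?_⟩
  · exact (lt_inv_comm₀ hs (by linarith)).2 h2
  · exact inv_lt_one_of_one_lt₀ hq
  · rw [inv_inv]; exact ((le_max_left _ _).trans (le_max_right _ _)).trans_lt h1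
  · rw [inv_inv]; exact ((le_max_right _ _).trans (le_max_right _ _)).trans_lt h1

lemma hasDerivAt_lam {s : ℝ} (hs : 0 < s) (lam : AA s →L[ℂ] ℂ) (V : AA s) {y : ℂ} (hy : ‖y‖ < s⁻¹) :
    HasDerivAt (fun y => lam (V * uu s y)) (lam (V * (XX s * uu s y ^ 2))) y :=
  lam.hasFDerivAt.comp_hasDerivAt y ((hasDerivAt_uu hs hy).const_mul V)

/-- multiplication functional -/
def mulF {s : ℝ} (lam : AA s →L[ℂ] ℂ) (V : AA s) : AA s →L[ℂ] ℂ :=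
  lam.comp (ContinuousLinearMap.mul ℂ (AA s) V)

lemma mulF_apply {s : ℝ} (lam : AA s →L[ℂ] ℂ) (V W : AA s) : mulF lam V W = lam (V * W) := rfl

lemma step1 {s : ℝ} (hs : 0 < s) (lam : AA s →L[ℂ] ℂ) {L0 : ℂ → ℂ}
    (hL0 : DifferentiableOn ℂ L0 (ball 0 s⁻¹))
    (h0 : ∀ z, ‖z‖ < s⁻¹ → -(1:ℝ) < (z * deriv L0 z).re)
    (hlam : ∀ y, ‖y‖ < s⁻¹ → HasDerivAt (fun y => y * lam (uu s y)) (Complex.exp (L0 y)) y) :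
    (∀ y, ‖y‖ < s⁻¹ → lam (uu s y ^ 2) = Complex.exp (L0 y)) ∧
    ∀ t, s < t → ∀ y w, ‖y‖ ≤ t⁻¹ → ‖w‖ = t⁻¹ →
      1/2 ≤ (lam (uu s y ^ 2 * uu s w) / lam (uu s y ^ 2)).re := by
  have e1 : ∀ y, ‖y‖ < s⁻¹ → lam (uu s y ^ 2) = Complex.exp (L0 y) := by
    intro y hy
    have h1 := (hasDerivAt_id y).mul (hasDerivAt_lam hs lam 1 hy)
    simp only [one_mul] at h1
    have h2 := h1.unique (hlam y hy)
    have h3 := congrArg lam (uu_sq hs hy)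
    rw [map_add, map_smul] at h3
    rw [← h2, h3]
    simp
  refine ⟨e1, ?_⟩
  intro t hst
  have ht : 0 < t := hs.trans hst
  have hti : t⁻¹ < s⁻¹ := by gcongr
  have hti0 : 0 < t⁻¹ := by positivity
  have hdiff : ∀ w, ‖w‖ < s⁻¹ → DifferentiableOn ℂ
      (fun y => lam (uu s y ^ 2 * uu s w) / lam (uu s y ^ 2)) (ball 0 s⁻¹) := by
    intro w hw y hy
    have hy' : ‖y‖ < s⁻¹ := by simpa using hy
    have d1 := ((hasDerivAt_uu hs hy').pow 2).differentiableAt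
    apply DifferentiableAt.differentiableWithinAt
    apply DifferentiableAt.fun_div
    · exact lam.differentiableAt.comp y (d1.mul_const _)
    · exact lam.differentiableAt.comp y d1
    · rw [e1 y hy']; exact Complex.exp_ne_zero _
  have b1 : ∀ y w, ‖y‖ = t⁻¹ → ‖w‖ = t⁻¹ → y ≠ w →
      1/2 ≤ (lam (uu s y ^ 2 * uu s w) / lam (uu s y ^ 2)).re := by
    intro y w hy hw hne
    have hy' : ‖y‖ < s⁻¹ := by linarith
    have hw' : ‖w‖ < s⁻¹ := by linarith
    have hy0 : y ≠ 0 := by rintro rfl; simp at hy; linarith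
    have hA := lemmaAconv hL0 h0 hlam hy' hy0 (w := w) (by rw [hy, hw])
    rw [← e1 y hy'] at hA
    have hF : lam (uu s y ^ 2) ≠ 0 := by rw [e1 y hy']; exact Complex.exp_ne_zero _
    have r1 := uu_resolvent hs hy' hw'
    have r2 : (y - w) • (uu s y ^ 2 * uu s w) = y • uu s y ^ 2 - w • (uu s y * uu s w) := by
      have := congrArg (fun v => uu s y * v) r1
      simp only [Algebra.smul_def] at *
      linear_combination this
    have r1' := congrArg lam r1
    have r2' := congrArg lam r2
    simp only [map_sub, map_smul, smul_eq_mul] at r1' r2'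
    obtain ⟨c, hc0, hc⟩ := neg_real (y := y) (w := w) (by rw [hy, hw]) hne
    have hs : y - w ≠ 0 := sub_ne_zero.2 hne
    have e : lam (uu s y ^ 2 * uu s w) / lam (uu s y ^ 2) = y / (y - w) +
        (c:ℂ) * ((y * lam (uu s y) - w * lam (uu s w)) / (y * lam (uu s y ^ 2))) := by
      rw [show (c:ℂ) = -(w * y / (y - w)^2) by rw [hc]; ring]
      field_simp
      linear_combination (y-w) * r2' - w * r1'
    rw [e, Complex.add_re, re_half (by rw [hy, hw]) hne, Complex.re_ofReal_mul]
    have := mul_nonneg hc0 hA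
    linarith
  have b2 : ∀ y w, ‖y‖ = t⁻¹ → ‖w‖ = t⁻¹ →
      1/2 ≤ (lam (uu s y ^ 2 * uu s w) / lam (uu s y ^ 2)).re := by
    intro y w hy hw
    by_cases hne : y = w
    · subst hne
      have hw0 : y ≠ 0 := by rintro rfl; simp at hw; linarith
      have hw' : ‖y‖ < s⁻¹ := by linarith
      refine half_closed (φ := fun v => (lam (uu s v ^ 2 * uu s y) / lam (uu s v ^ 2)).re) ?_ hw0 ?_
      · exact Complex.continuous_re.continuousAt.comp
          ((hdiff y hw').differentiableAt (isOpen_ball.mem_nhds (by simpa using hw'))).continuousAt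
      · intro v hv hne; exact b1 v y (by rw [hv, hw]) hw hne
    · exact b1 y w hy hw hne
  intro y w hy hw
  exact minRe_closedBall hti0 ((hdiff w (by linarith)).diffContOnCl_ball
    (closedBall_subset_ball hti)) (fun y hy => b2 y w hy hw) y hy

lemma step3 {s : ℝ} (hs : 0 < s) (lam : AA s →L[ℂ] ℂ) (V : AA s)
    (hne : ∀ x y : ℂ, ‖x‖ < s⁻¹ → ‖y‖ < s⁻¹ → lam (uu s y ^ 2 * ((1 + x • XX s) * V)) ≠ 0) :
    (∀ y, ‖y‖ < s⁻¹ → lam (V * uu s y) ≠ 0) ∧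
    ∀ t, s < t → ∀ y w, ‖y‖ ≤ t⁻¹ → ‖w‖ = t⁻¹ →
      1/2 ≤ (lam (V * uu s y * uu s w) / lam (V * uu s y)).re := by
  have key : ∀ x y : ℂ, ‖x‖ < s⁻¹ → ‖y‖ < s⁻¹ →
      lam (V * uu s y) + (y + x) * lam (V * (XX s * uu s y ^ 2)) ≠ 0 := by
    intro x y hx hy
    have e : uu s y ^ 2 * ((1 + x • XX s) * V) =
        V * uu s y + (y + x) • (V * (XX s * uu s y ^ 2)) := by
      have := uu_sq hs hy
      simp only [Algebra.smul_def, map_add] at *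
      linear_combination V * this
    have := hne x y hx hy
    rw [e] at this
    simpa using this
  have m0 : ∀ y, ‖y‖ < s⁻¹ → lam (V * uu s y) ≠ 0 := by
    intro y hy
    simpa using key (-y) y (by simpa using hy) hy
  refine ⟨m0, ?_⟩
  have hR : 0 < s⁻¹ := by positivity
  have hmd : DifferentiableOn ℂ (fun y => lam (V * uu s y)) (ball 0 s⁻¹) := fun y hy =>
    (hasDerivAt_lam hs lam V (by simpa using hy)).differentiableAt.differentiableWithinAt
  obtain ⟨M, hM⟩ := log_exists hR hmd m0
  have hMd : DifferentiableOn ℂ M (ball 0 s⁻¹) := fun y hy =>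
    (hM y (by simpa using hy)).1.differentiableAt.differentiableWithinAt
  have hMre : ∀ y, ‖y‖ < s⁻¹ → -(1/2:ℝ) < (y * deriv M y).re := by
    intro y hy
    rw [(hM y hy).1.deriv, (hasDerivAt_lam hs lam V hy).deriv]
    set τ := y * (lam (V * (XX s * uu s y ^ 2)) / lam (V * uu s y)) with hτ
    by_contra hcon
    push Not at hcon
    have hτ0 : τ ≠ 0 := by intro h; rw [h] at hcon; simp at hcon; linarith
    have hn : ‖1 + τ‖ ≤ ‖τ‖ := by
      rw [← sq_le_sq₀ (norm_nonneg _) (norm_nonneg _), Complex.sq_norm, Complex.sq_norm,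
        Complex.normSq_apply, Complex.normSq_apply]
      simp; nlinarith
    have hξ : ‖-(1 + τ) / τ‖ ≤ 1 := by
      rw [norm_div, norm_neg]; exact div_le_one_of_le₀ hn (norm_nonneg _)
    have hx : ‖-(1 + τ) / τ * y‖ < s⁻¹ := by
      rw [norm_mul]
      calc _ ≤ 1 * ‖y‖ := by gcongr
        _ < s⁻¹ := by simpa using hy
    apply key _ y hx hy
    have hm := m0 y hy
    have e : y * lam (V * (XX s * uu s y ^ 2)) = τ * lam (V * uu s y) := by
      rw [hτ]; field_simp
    field_simp
    linear_combination (-1) * e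
  intro t hst
  have ht : 0 < t := hs.trans hst
  have hti : t⁻¹ < s⁻¹ := by gcongr
  have hti0 : 0 < t⁻¹ := by positivity
  have hdiff : ∀ w, ‖w‖ < s⁻¹ → DifferentiableOn ℂ
      (fun y => lam (V * uu s y * uu s w) / lam (V * uu s y)) (ball 0 s⁻¹) := by
    intro w hw y hy
    have hy' : ‖y‖ < s⁻¹ := by simpa using hy
    have d1 := ((hasDerivAt_uu hs hy').const_mul V).differentiableAt
    apply DifferentiableAt.differentiableWithinAt
    apply DifferentiableAt.fun_div
    · exact lam.differentiableAt.comp y (d1.mul_const _)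
    · exact lam.differentiableAt.comp y d1
    · exact m0 y hy'
  have b1 : ∀ y w, ‖y‖ = t⁻¹ → ‖w‖ = t⁻¹ → y ≠ w →
      1/2 ≤ (lam (V * uu s y * uu s w) / lam (V * uu s y)).re := by
    intro y w hy hw hne
    have hy' : ‖y‖ < s⁻¹ := by linarith
    have hw' : ‖w‖ < s⁻¹ := by linarith
    have hw0 : w ≠ 0 := by rintro rfl; simp at hw; linarith
    have hB := lemmaB hMd hMre hw' hw0 (y := y) (by rw [hy, hw])
    rw [Complex.exp_sub, (hM y hy').2, (hM w hw').2] at hB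
    have hmy := m0 y hy'
    have hmw := m0 w hw'
    have r1 := uu_resolvent hs hy' hw'
    have r2 : (y - w) • (V * uu s y * uu s w) = y • (V * uu s y) - w • (V * uu s w) := by
      have := congrArg (fun v => V * v) r1
      simp only [Algebra.smul_def] at *
      linear_combination this
    have r2' := congrArg lam r2
    simp only [map_sub, map_smul, smul_eq_mul] at r2'
    have hs : y - w ≠ 0 := sub_ne_zero.2 hne
    have hs' : w - y ≠ 0 := sub_ne_zero.2 hne.symm
    have e : lam (V * uu s y * uu s w) / lam (V * uu s y) = y / (y - w) +
        (lam (V * uu s y) / lam (V * uu s w) * (1 - y / w))⁻¹ := by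
      have : 1 - y / w = -(y - w) / w := by field_simp; ring
      rw [this]
      field_simp
      linear_combination r2'
    rw [e, Complex.add_re, re_half (by rw [hy, hw]) hne, Complex.inv_re]
    have := div_nonneg hB (Complex.normSq_nonneg (lam (V * uu s y) / lam (V * uu s w) * (1 - y / w)))
    linarith
  have b2 : ∀ y w, ‖y‖ = t⁻¹ → ‖w‖ = t⁻¹ →
      1/2 ≤ (lam (V * uu s y * uu s w) / lam (V * uu s y)).re := by
    intro y w hy hw
    by_cases hne : y = w
    · subst hne
      have hw0 : y ≠ 0 := by rintro rfl; simp at hw; linarith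
      have hw' : ‖y‖ < s⁻¹ := by linarith
      refine half_closed (φ := fun v => (lam (V * uu s v * uu s y) / lam (V * uu s v)).re) ?_ hw0 ?_
      · exact Complex.continuous_re.continuousAt.comp
          ((hdiff y hw').differentiableAt (isOpen_ball.mem_nhds (by simpa using hw'))).continuousAt
      · intro v hv hne; exact b1 v y (by rw [hv, hw]) hw hne
    · exact b1 y w hy hw hne
  intro y w hy hw
  exact minRe_closedBall hti0 ((hdiff w (by linarith)).diffContOnCl_ball
    (closedBall_subset_ball hti)) (fun y hy => b2 y w hy hw) y hy

theorem RSS {s : ℝ} (hs : 0 < s) (hs1 : s < 1) (lam : AA s →L[ℂ] ℂ) {L0 : ℂ → ℂ}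
    (hL0 : DifferentiableOn ℂ L0 (ball 0 s⁻¹))
    (h0 : ∀ z, ‖z‖ < s⁻¹ → -(1:ℝ) < (z * deriv L0 z).re)
    (hlam : ∀ y, ‖y‖ < s⁻¹ → HasDerivAt (fun y => y * lam (uu s y)) (Complex.exp (L0 y)) y)
    {L : ℂ → ℂ} (hL : DifferentiableOn ℂ L (ball 0 1))
    (h : ∀ z, ‖z‖ < 1 → -(1/2:ℝ) < (z * deriv L z).re) :
    lam (toA s (fun z => Complex.exp (L z)) ^ 2) ≠ 0 ∧
    ∀ p : ℂ → ℂ, DifferentiableOn ℂ p (ball 0 1) → (∀ z, ‖z‖ < 1 → 0 < (p z).re) →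
      0 < (lam (toA s (fun z => Complex.exp (L z)) ^ 2 * toA s p) /
        lam (toA s (fun z => Complex.exp (L z)) ^ 2)).re := by
  set V := toA s (fun z => Complex.exp (L z)) with hV
  obtain ⟨a1, a2⟩ := step1 hs lam hL0 h0 hlam
  have hne : ∀ x y : ℂ, ‖x‖ < s⁻¹ → ‖y‖ < s⁻¹ → lam (uu s y ^ 2 * ((1 + x • XX s) * V)) ≠ 0 := by
    intro x y hx hy
    obtain ⟨t, t1, t2, t3, t4⟩ := exists_t hs hs1 hx hy
    apply lemmaD hs t1 t2 (mulF lam (uu s y ^ 2)) ?_ ?_ hL h t3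
    · rw [mulF_apply, mul_one, a1 y hy]; exact Complex.exp_ne_zero _
    · intro w hw
      rw [mulF_apply, mulF_apply, mul_one]
      exact a2 t t1 y w t4.le hw
  obtain ⟨c1, c2⟩ := step3 hs lam V hne
  have hne2 : ∀ x y : ℂ, ‖x‖ < s⁻¹ → ‖y‖ < s⁻¹ → lam (V * uu s y * ((1 + x • XX s) * V)) ≠ 0 := by
    intro x y hx hy
    obtain ⟨t, t1, t2, t3, t4⟩ := exists_t hs hs1 hx hy
    apply lemmaD hs t1 t2 (mulF lam (V * uu s y)) ?_ ?_ hL h t3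
    · rw [mulF_apply, mul_one]; exact c1 y hy
    · intro w hw
      rw [mulF_apply, mulF_apply, mul_one]
      exact c2 t t1 y w t4.le hw
  have hR : 0 < s⁻¹ := by positivity
  have g0 : lam (V ^ 2) ≠ 0 := by
    have := hne2 0 0 (by simpa using hR) (by simpa using hR)
    rw [uu_zero] at this
    simpa [sq] using this
  refine ⟨g0, ?_⟩
  have half : ∀ y, ‖y‖ < s⁻¹ → 1/2 ≤ (lam (V ^ 2 * uu s y) / lam (V ^ 2)).re := by
    intro y hy
    set K := lam (V ^ 2 * uu s y) / lam (V ^ 2) with hK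
    have hKe : lam (V ^ 2 * uu s y) = K * lam (V^2) := by rw [hK]; field_simp
    by_contra hcon
    push Not at hcon
    have hn : ‖K‖ < ‖1 - K‖ := by
      rw [← sq_lt_sq₀ (norm_nonneg _) (norm_nonneg _), Complex.sq_norm, Complex.sq_norm,
        Complex.normSq_apply, Complex.normSq_apply]
      simp; nlinarith
    have hK1 : 1 - K ≠ 0 := by
      intro h; rw [h] at hn; simp at hn; linarith [norm_nonneg K]
    have hξ : ‖K / (1 - K)‖ ≤ 1 := by
      rw [norm_div]; exact div_le_one_of_le₀ hn.le (norm_nonneg _)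
    have hx : ‖K / (1 - K) * y‖ < s⁻¹ := by
      rw [norm_mul]
      calc _ ≤ 1 * ‖y‖ := by gcongr
        _ < s⁻¹ := by simpa using hy
    apply hne2 _ y hx hy
    have e : V * uu s y * ((1 + (K / (1 - K) * y) • XX s) * V) =
        V^2 * uu s y + (K / (1 - K)) • (V^2 * uu s y - V^2) := by
      have := uu_X hs hy
      simp only [Algebra.smul_def, map_mul] at *
      linear_combination (algebraMap ℂ (AA s) (K / (1 - K)) * V^2) * this
    rw [e, map_add, map_smul, map_sub, hKe, smul_eq_mul]
    field_simp
    ring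
  intro p hp hpos
  obtain ⟨t, t1, t2⟩ := exists_between hs1
  have := lemmaC hs t1 t2 (mulF lam (V^2)) (by rw [mulF_apply, mul_one]; exact g0) ?_ hp
    (fun z hz => hpos z (by rw [hz]; exact t2))
  · rwa [mulF_apply, mulF_apply, mul_one] at this
  · intro w hw
    rw [mulF_apply, mulF_apply, mul_one]
    apply half w
    rw [hw]
    gcongr


lemma mem_D {z : ℂ} : z ∈ 𝔻 ↔ ‖z‖ < 1 := by simp [𝔻]

lemma isOpen_D : IsOpen 𝔻 := isOpen_ball

lemma MaMinda.analytic {ψ : ℂ → ℂ} (h : MaMinda ψ) : AnalyticOnNhd ℂ ψ 𝔻 :=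
  h.1.analyticOnNhd isOpen_D

lemma MaMinda.open_image {ψ : ℂ → ℂ} (h : MaMinda ψ) {s : Set ℂ} (hs : s ⊆ 𝔻) (ho : IsOpen s) :
    IsOpen (ψ '' s) := by
  rcases h.analytic.is_constant_or_isOpen (convex_ball (0:ℂ) 1).isPreconnected with ⟨w, hw⟩ | h2
  · exfalso
    have m0 : (0:ℂ) ∈ 𝔻 := by simp [mem_D]
    have m1 : (1/2:ℂ) ∈ 𝔻 := by rw [mem_D]; norm_num
    have := h.2.1 m0 m1 (by rw [hw _ m0, hw _ m1])
    norm_num at this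
  · exact h2 s hs ho

lemma MaMinda.inverse {ψ : ℂ → ℂ} (h : MaMinda ψ) :
    ∃ φ : ℂ → ℂ, DifferentiableOn ℂ φ (ψ '' 𝔻) ∧ ∀ z ∈ 𝔻, φ (ψ z) = z := by
  have hinv : ∀ z ∈ 𝔻, Function.invFunOn ψ 𝔻 (ψ z) = z := fun z hz =>
    h.2.1.leftInvOn_invFunOn hz
  refine ⟨Function.invFunOn ψ 𝔻, ?_, hinv⟩
  set φ := Function.invFunOn ψ 𝔻
  have hopen : IsOpen (ψ '' 𝔻) := h.open_image subset_rfl isOpen_D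
  have hcont : ∀ w ∈ ψ '' 𝔻, ContinuousAt φ w := by
    rintro _ ⟨z0, hz0, rfl⟩
    intro U hU
    rw [hinv z0 hz0] at hU
    obtain ⟨W, hW1, hW2, hW3⟩ := _root_.mem_nhds_iff.1 hU
    have : ψ '' (W ∩ 𝔻) ∈ nhds (ψ z0) :=
      (h.open_image inter_subset_right (hW2.inter isOpen_D)).mem_nhds ⟨z0, ⟨hW3, hz0⟩, rfl⟩
    rw [Filter.mem_map]
    refine Filter.mem_of_superset this ?_
    rintro _ ⟨z, ⟨hz1, hz2⟩, rfl⟩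
    rw [mem_preimage, hinv z hz2]
    exact hW1 hz1
  have hda : ∀ z ∈ 𝔻, deriv ψ z ≠ 0 → DifferentiableAt ℂ φ (ψ z) := by
    intro z hz hne
    have hd : HasDerivAt ψ (deriv ψ z) (φ (ψ z)) := by
      rw [hinv z hz]
      exact (h.1.differentiableAt (isOpen_D.mem_nhds hz)).hasDerivAt
    refine (HasDerivAt.of_local_left_inverse (hcont _ ⟨z, hz, rfl⟩) hd hne ?_).differentiableAt
    filter_upwards [hopen.mem_nhds ⟨z, hz, rfl⟩] with w hw
    obtain ⟨v, hv, rfl⟩ := hw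
    rw [hinv v hv]
  have hder : AnalyticOnNhd ℂ (deriv ψ) 𝔻 := h.analytic.deriv
  rintro _ ⟨z0, hz0, rfl⟩
  apply AnalyticAt.differentiableWithinAt
  apply analyticAt_of_differentiable_on_punctured_nhds_of_continuousAt _ (hcont _ ⟨z0, hz0, rfl⟩)
  rcases (hder z0 hz0).eventually_eq_zero_or_eventually_ne_zero with h1 | h1
  · exfalso
    have := hder.eqOn_zero_of_preconnected_of_eventuallyEq_zero
      (convex_ball (0:ℂ) 1).isPreconnected hz0 h1
    have h0 := this (show (0:ℂ) ∈ 𝔻 by simp [mem_D])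
    have := h.2.2.2.2.1
    rw [h0] at this
    simp at this
  · have ht : Filter.Tendsto φ (nhdsWithin (ψ z0) {ψ z0}ᶜ) (nhdsWithin z0 {z0}ᶜ) := by
      rw [tendsto_nhdsWithin_iff]
      constructor
      · have := (hcont _ ⟨z0, hz0, rfl⟩).tendsto
        rw [hinv z0 hz0] at this
        exact this.mono_left nhdsWithin_le_nhds
      · filter_upwards [self_mem_nhdsWithin, mem_nhdsWithin_of_mem_nhds
          (hopen.mem_nhds ⟨z0, hz0, rfl⟩)] with w hw hw2
        obtain ⟨v, hv, rfl⟩ := hw2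
        rw [hinv v hv]
        rintro rfl
        exact hw rfl
    filter_upwards [ht.eventually h1, mem_nhdsWithin_of_mem_nhds
          (hopen.mem_nhds ⟨z0, hz0, rfl⟩)] with w hw hw2
    obtain ⟨v, hv, rfl⟩ := hw2
    rw [hinv v hv] at hw
    exact hda v hv hw

lemma starlike_data {ψ f : ℂ → ℂ} (hψ : MaMinda ψ) (hf : StarlikeMM ψ f) :
    ∃ L P : ℂ → ℂ, DifferentiableOn ℂ L (ball 0 1) ∧ DifferentiableOn ℂ P (ball 0 1) ∧
      (∀ z, ‖z‖ < 1 → f z = z * Complex.exp (L z)) ∧ Complex.exp (L 0) = 1 ∧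
      (∀ z, ‖z‖ < 1 → P z ∈ ψ '' 𝔻) ∧
      (∀ z, ‖z‖ < 1 → deriv f z = Complex.exp (L z) * P z) ∧
      (∀ z, ‖z‖ < 1 → z * deriv L z = P z - 1) := by
  obtain ⟨⟨hd, h0, h1⟩, hne, ω, hω, hω0, hωD, hωe⟩ := hf
  have m0 : (0:ℂ) ∈ 𝔻 := by simp [mem_D]
  have hds : DifferentiableOn ℂ (dslope f 0) (ball 0 1) :=
    (Complex.differentiableOn_dslope (isOpen_D.mem_nhds m0)).2 hd
  have hfe : ∀ z, f z = z * dslope f 0 z := by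
    intro z
    have := sub_smul_dslope f 0 z
    rw [h0] at this
    simpa using this.symm
  have hdne : ∀ z, ‖z‖ < 1 → dslope f 0 z ≠ 0 := by
    intro z hz
    by_cases hz0 : z = 0
    · rw [hz0, dslope_same, h1]; exact one_ne_zero
    · intro h
      apply hne z (mem_D.2 hz) hz0
      rw [hfe, h, mul_zero]
  obtain ⟨L, hL⟩ := log_exists one_pos hds hdne
  have hLd : DifferentiableOn ℂ L (ball 0 1) := fun z hz =>
    (hL z (by simpa using hz)).1.differentiableAt.differentiableWithinAt
  have hfL : ∀ z, ‖z‖ < 1 → f z = z * Complex.exp (L z) := by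
    intro z hz; rw [(hL z hz).2, ← hfe]
  have hL0 : Complex.exp (L 0) = 1 := by
    rw [(hL 0 (by simp)).2, dslope_same, h1]
  have hder : ∀ z, ‖z‖ < 1 → deriv f z = Complex.exp (L z) * ψ (ω z) := by
    intro z hz
    by_cases hz0 : z = 0
    · rw [hz0, h1, hL0, hω0, hψ.2.2.2.1, mul_one]
    · have := hωe z (mem_D.2 hz)
      simp only [hz0, if_false] at this
      rw [← this, hfL z hz]
      have := Complex.exp_ne_zero (L z)
      field_simp
  refine ⟨L, fun z => ψ (ω z), hLd, hψ.1.comp hω hωD, hfL, hL0,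
    fun z hz => ⟨ω z, hωD z (mem_D.2 hz), rfl⟩, hder, ?_⟩
  intro z hz
  have hzb : z ∈ ball (0:ℂ) 1 := by simpa using hz
  have d1 : HasDerivAt L (deriv L z) z :=
    (hLd.differentiableAt (isOpen_ball.mem_nhds hzb)).hasDerivAt
  have d2 := (hasDerivAt_id z).mul d1.cexp
  have d3 : HasDerivAt f _ z := d2.congr_of_eventuallyEq (by
    filter_upwards [isOpen_ball.mem_nhds hzb] with w hw
    exact hfL w (by simpa using hw))
  have d4 := d3.deriv
  rw [hder z hz] at d4
  have := Complex.exp_ne_zero (L z)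
  simp at d4
  apply mul_left_cancel₀ this
  linear_combination -d4

/-! power series -/

lemma ps_summable {a : ℕ → ℂ} {F : ℂ → ℂ} (h : ∀ z, ‖z‖ < 1 → HasSum (fun n => a n * z ^ n) (F z))
    {q : ℝ} (hq0 : 0 ≤ q) (hq : q < 1) : Summable (fun n => ‖a n‖ * q ^ n) := by
  have := (h (q:ℂ) (by simpa [abs_of_nonneg hq0] using hq)).summable.norm
  simpa [abs_of_nonneg hq0] using this

lemma ps_deriv {a : ℕ → ℂ} {F : ℂ → ℂ}
    (h : ∀ z, ‖z‖ < 1 → HasSum (fun n => a n * z ^ n) (F z)) :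
    DifferentiableOn ℂ F (ball 0 1) ∧
    ∀ z, ‖z‖ < 1 → HasSum (fun n : ℕ => ((n:ℂ) + 1) * a (n+1) * z ^ n) (deriv F z) := by
  have key : ∀ z, ‖z‖ < 1 → DifferentiableAt ℂ F z ∧
      HasSum (fun n : ℕ => ((n:ℂ) + 1) * a (n+1) * z ^ n) (deriv F z) := by
    intro z hz
    obtain ⟨q, hq1, hq2⟩ := exists_between hz
    have hq0 : 0 ≤ q := (norm_nonneg z).trans hq1.le
    have hs := ps_summable h hq0 hq2
    have hdf : ∀ n : ℕ, DifferentiableOn ℂ (fun w : ℂ => a n * w ^ n) (ball 0 q) := by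
      intro n; fun_prop
    have hle : ∀ (n : ℕ) (w : ℂ), w ∈ ball (0:ℂ) q → ‖a n * w ^ n‖ ≤ ‖a n‖ * q ^ n := by
      intro n w hw
      have : ‖w‖ ≤ q := by simpa using (mem_ball_zero_iff.1 hw).le
      rw [norm_mul, norm_pow]
      gcongr
    have hzq : z ∈ ball (0:ℂ) q := by simpa using hq1
    have e : (fun w => ∑' n, a n * w ^ n) =ᶠ[nhds z] F := by
      filter_upwards [isOpen_ball.mem_nhds hzq] with w hw
      exact (h w ((mem_ball_zero_iff.1 hw).trans hq2)).tsum_eq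
    have d1 := (differentiableOn_tsum_of_summable_norm hs hdf isOpen_ball hle).differentiableAt
      (isOpen_ball.mem_nhds hzq)
    have d2 := hasSum_deriv_of_summable_norm hs hdf isOpen_ball hle hzq
    refine ⟨d1.congr_of_eventuallyEq e.symm, ?_⟩
    rw [e.deriv_eq] at d2
    rw [← hasSum_nat_add_iff' 1] at d2
    simp at d2
    refine d2.congr_fun ?_
    intro n
    ring
  exact ⟨fun z hz => (key z (by simpa using hz)).1.differentiableWithinAt, fun z hz => (key z hz).2⟩

lemma ps_shift {a : ℕ → ℂ} {z S T : ℂ} (h0 : a 0 = 0) (hz : z ≠ 0) (hS : S = z * T) :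
    HasSum (fun n => a n * z ^ n) S ↔ HasSum (fun n => a (n+1) * z ^ n) T := by
  rw [← hasSum_nat_add_iff' 1]
  simp only [Finset.range_one, Finset.sum_singleton, h0, zero_mul, sub_zero]
  rw [hS, ← hasSum_mul_left_iff (f := fun n => a (n+1) * z ^ n) hz]
  have : (fun n => a (n+1) * z ^ (n+1)) = fun n => z * (a (n+1) * z ^ n) := by
    ext n; ring
  rw [this]

lemma ps_unique {a b : ℕ → ℂ} {F : ℂ → ℂ} {R : ℝ} (hR : 0 < R)
    (h1 : ∀ z, ‖z‖ < R → HasSum (fun n => a n * z ^ n) (F z))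
    (h2 : ∀ z, ‖z‖ < R → HasSum (fun n => b n * z ^ n) (F z)) : a = b := by
  have H : ∀ c : ℕ → ℂ, (∀ z, ‖z‖ < R → HasSum (fun n => c n * z ^ n) (F z)) →
      HasFPowerSeriesAt F (FormalMultilinearSeries.ofScalars ℂ c) 0 := by
    intro c hc
    rw [hasFPowerSeriesAt_iff]
    filter_upwards [ball_mem_nhds (0:ℂ) hR] with z hz
    have := hc z (by simpa using hz)
    simpa [FormalMultilinearSeries.coeff_ofScalars, mul_comm] using this
  have e := (H a h1).eq_formalMultilinearSeries (H b h2)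
  ext n
  have := congrArg (fun p => FormalMultilinearSeries.coeff p n) e
  simpa [FormalMultilinearSeries.coeff_ofScalars] using this

lemma toA_hasSum {s : ℝ} (hs : 0 < s) (hs1 : s < 1) {b : ℕ → ℂ} {v : ℂ → ℂ}
    (h : ∀ z, ‖z‖ < 1 → HasSum (fun n => b n * z ^ n) (v z)) :
    HasSum (fun n => b n • XX s ^ n) (toA s v) := by
  have hc : ContinuousOn v (closedBall 0 s) :=
    (ps_deriv h).1.continuousOn.mono (closedBall_subset_ball hs1)
  have hsum : Summable (fun n => b n • XX s ^ n) := by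
    apply Summable.of_norm_bounded (ps_summable h hs.le hs1)
    intro n
    rw [norm_smul]
    gcongr
    calc ‖XX s ^ n‖ ≤ ‖XX s‖ ^ n := by
          rcases Nat.eq_zero_or_pos n with rfl | hn
          · simp [ContinuousMap.norm_le _ zero_le_one]
          · exact norm_pow_le' _ hn
      _ ≤ s ^ n := by gcongr; exact norm_XX_le hs
  have : ∑' n, b n • XX s ^ n = toA s v := by
    ext ζ
    have hζ : ‖(ζ:ℂ)‖ < 1 := (mem_closedBall_zero_iff.1 ζ.2).trans_lt hs1
    have h1 := hsum.hasSum.mapL (ContinuousMap.evalCLM ℂ ζ)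
    have h2 := h ζ hζ
    rw [toA_apply hc]
    refine HasSum.unique h1 ?_
    simpa [XX] using h2
  rw [← this]; exact hsum.hasSum

lemma uu_hasSum {s : ℝ} (hs : 0 < s) {y : ℂ} (hy : ‖y‖ < s⁻¹) :
    HasSum (fun n => y ^ n • XX s ^ n) (uu s y) := by
  have h := summable_geometric_of_norm_lt_one (norm_smul_XX_lt hs hy)
  have e : uu s y = ∑' n, (y • XX s) ^ n := by
    rw [uu, NormedRing.inverse_one_sub _ (norm_smul_XX_lt hs hy)]; rfl
  rw [e]
  simpa only [smul_pow] using h.hasSum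


lemma exists_lam {s R : ℝ} (hs : 0 < s) (hR : s⁻¹ < R) {Ψ : ℂ → ℂ}
    (hΨ : DifferentiableOn ℂ Ψ (ball 0 R)) :
    ∃ lam : AA s →L[ℂ] ℂ, ∀ y, ‖y‖ < s⁻¹ → lam (uu s y) = Ψ y := by
  have hs' : 0 < s⁻¹ := by positivity
  have hpt : ∀ θ : ℝ, (circleMap 0 s⁻¹ θ)⁻¹ ∈ closedBall (0:ℂ) s := by
    intro θ
    rw [mem_closedBall_zero_iff, norm_inv, norm_circleMap_zero, abs_of_pos hs', inv_inv]
  let pt : ℝ → closedBall (0:ℂ) s := fun θ => ⟨(circleMap 0 s⁻¹ θ)⁻¹, hpt θ⟩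
  have hptc : Continuous pt := by
    apply Continuous.subtype_mk
    apply Continuous.inv₀ (continuous_circleMap _ _)
    intro θ
    rw [← norm_ne_zero_iff, norm_circleMap_zero, abs_of_pos hs']; exact hs'.ne'
  have hΨc : Continuous (fun θ : ℝ => Ψ (circleMap 0 s⁻¹ θ)) := by
    apply hΨ.continuousOn.comp_continuous (continuous_circleMap _ _)
    intro θ
    rw [mem_ball_zero_iff, norm_circleMap_zero, abs_of_pos hs']; exact hR
  obtain ⟨M, hM⟩ := ((isCompact_Icc (a := (0:ℝ)) (b := 2 * Real.pi)).exists_bound_of_continuousOn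
    hΨc.continuousOn)
  have hcont : ∀ v : AA s, Continuous fun θ => v (pt θ) * Ψ (circleMap 0 s⁻¹ θ) := fun v =>
    (v.continuous.comp hptc).mul hΨc
  let lin : AA s →ₗ[ℂ] ℂ :=
    { toFun := fun v => (2 * Real.pi : ℝ)⁻¹ • ∫ θ in (0:ℝ)..(2 * Real.pi),
        v (pt θ) * Ψ (circleMap 0 s⁻¹ θ)
      map_add' := by
        intro v w
        rw [← smul_add, ← intervalIntegral.integral_add ((hcont v).intervalIntegrable _ _)
          ((hcont w).intervalIntegrable _ _)]
        simp [add_mul]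
      map_smul' := by
        intro c v
        simp only [ContinuousMap.smul_apply, smul_eq_mul, mul_assoc, RingHom.id_apply]
        rw [intervalIntegral.integral_const_mul]
        simp only [Complex.real_smul]
        ring }
  have hbound : ∀ v, ‖lin v‖ ≤ M * ‖v‖ := by
    intro v
    have h1 : ‖∫ θ in (0:ℝ)..(2 * Real.pi), v (pt θ) * Ψ (circleMap 0 s⁻¹ θ)‖ ≤
        (M * ‖v‖) * |2 * Real.pi - 0| := by
      apply intervalIntegral.norm_integral_le_of_norm_le_const
      intro θ hθ
      rw [uIoc_of_le Real.two_pi_pos.le] at hθ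
      rw [norm_mul, mul_comm]
      have a1 := hM θ ⟨hθ.1.le, hθ.2⟩
      have a2 := v.norm_coe_le_norm (pt θ)
      have a3 : 0 ≤ M := (norm_nonneg _).trans a1
      gcongr
    change ‖(2 * Real.pi : ℝ)⁻¹ • (∫ θ in (0:ℝ)..(2 * Real.pi), v (pt θ) * Ψ (circleMap 0 s⁻¹ θ))‖ ≤ _
    rw [norm_smul, norm_inv, Real.norm_of_nonneg Real.two_pi_pos.le]
    rw [sub_zero, abs_of_pos Real.two_pi_pos] at h1
    rw [inv_mul_le_iff₀ Real.two_pi_pos]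
    linarith
  refine ⟨lin.mkContinuous M hbound, ?_⟩
  intro y hy
  rw [LinearMap.mkContinuous_apply]
  have habs : |s⁻¹| = s⁻¹ := abs_of_pos hs'
  have hd : DiffContOnCl ℂ Ψ (ball 0 |s⁻¹|) := by
    rw [habs]; exact hΨ.diffContOnCl_ball (closedBall_subset_ball hR)
  rw [← hd.circleAverage_smul_div (w := y) (by rw [habs]; simpa using hy)]
  rw [Real.circleAverage]
  change (2 * Real.pi : ℝ)⁻¹ • (∫ θ in (0:ℝ)..(2 * Real.pi), (uu s y) (pt θ) * Ψ (circleMap 0 s⁻¹ θ)) = _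
  congr 1
  apply intervalIntegral.integral_congr
  intro θ _
  simp only [uu_apply hs hy, pt, smul_eq_mul, sub_zero]
  have hn : ‖circleMap 0 s⁻¹ θ‖ = s⁻¹ := by rw [norm_circleMap_zero, habs]
  have h0 : circleMap 0 s⁻¹ θ ≠ 0 := by
    rw [← norm_ne_zero_iff, hn]; exact hs'.ne'
  have h1 : circleMap 0 s⁻¹ θ - y ≠ 0 := by
    intro h
    rw [sub_eq_zero.1 h] at hn; linarith
  congr 1
  have : 1 - y * (circleMap 0 s⁻¹ θ)⁻¹ = (circleMap 0 s⁻¹ θ - y) / circleMap 0 s⁻¹ θ := by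
    rw [sub_div, div_self h0, div_eq_mul_inv]
  rw [this, inv_div]

lemma core {ψ : ℂ → ℂ} (hψ : MaMinda ψ) (hconv : Convex ℝ (ψ '' 𝔻))
    {f A : ℂ → ℂ} {a α : ℕ → ℂ} (hf : StarlikeMM ψ f) (hA : StarlikeMM ψ A)
    (ha0 : a 0 = 0) (ha1 : a 1 = 1) (hα0 : α 0 = 0) (hα1 : α 1 = 1)
    (hfa : ∀ z, ‖z‖ < 1 → HasSum (fun n => a n * z^n) (f z))
    (hAα : ∀ z, ‖z‖ < 1 → HasSum (fun n => α n * z^n) (A z)) {z0 : ℂ} (hz0 : z0 ≠ 0)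
    (hz1 : ‖z0‖ < 1) :
    ∃ K K' : ℂ, HasSum (fun n => a n * α n / n * z0 ^ n) K ∧
      HasSum (fun n : ℕ => ((n:ℂ) + 1) * (a (n+1) * α (n+1) / ((n+1 : ℕ):ℂ)) * z0 ^ n) K' ∧ K ≠ 0 ∧
      z0 * K' / K ∈ ψ '' 𝔻 := by
  obtain ⟨Lf, Pf, hLf, -, hfe, hLf0, hPf, hdf, hLPf⟩ := starlike_data hψ hf
  obtain ⟨LA, PA, hLA, hPAd, hAe, hLA0, hPA, hdA, hLPA⟩ := starlike_data hψ hA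
  have hpos : ∀ w ∈ ψ '' 𝔻, 0 < w.re := by
    rintro _ ⟨v, hv, rfl⟩; exact hψ.2.2.1 v hv
  -- shifted series
  have shift : ∀ {g L : ℂ → ℂ} {c : ℕ → ℂ}, c 0 = 0 → c 1 = 1 → Complex.exp (L 0) = 1 →
      (∀ z, ‖z‖ < 1 → g z = z * Complex.exp (L z)) →
      (∀ z, ‖z‖ < 1 → HasSum (fun n => c n * z^n) (g z)) →
      ∀ z, ‖z‖ < 1 → HasSum (fun n => c (n+1) * z ^ n) (Complex.exp (L z)) := by
    intro g L c h0 h1 h2 h3 h4 z hz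
    by_cases hzz : z = 0
    · rw [hzz, h2, ← h1]
      have := hasSum_single (f := fun n => c (n+1) * (0:ℂ) ^ n) 0 (by intro n hn; simp [hn])
      simpa using this
    · exact (ps_shift h0 hzz (h3 z hz)).1 (h4 z hz)
  have sf := shift ha0 ha1 hLf0 hfe hfa
  have sA := shift hα0 hα1 hLA0 hAe hAα
  have sdA := (ps_deriv hAα).2
  -- integrated series
  set c : ℕ → ℂ := fun n => a (n+1) / ((n:ℂ) + 1) with hc
  have hcle : ∀ n, ‖c n‖ ≤ ‖a (n+1)‖ := by
    intro n
    rw [hc]; simp only [norm_div]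
    apply div_le_self (norm_nonneg _)
    have : ((n:ℂ) + 1) = ((n+1 : ℕ) : ℂ) := by push_cast; rfl
    rw [this, Complex.norm_natCast]
    push_cast; linarith [Nat.cast_nonneg (α := ℝ) n]
  have hφs : ∀ z, ‖z‖ < 1 → HasSum (fun n => c n * z ^ n) (∑' n, c n * z ^ n) := by
    intro z hz
    apply Summable.hasSum
    apply Summable.of_norm_bounded (ps_summable sf (norm_nonneg z) hz)
    intro n
    rw [norm_mul, norm_pow]
    gcongr
    exact hcle n
  set φ : ℂ → ℂ := fun z => ∑' n, c n * z ^ n with hφ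
  have hφd := (ps_deriv hφs).1
  -- derivative of z φ
  have hφ1 : ∀ z, ‖z‖ < 1 → HasDerivAt (fun z => z * φ z) (Complex.exp (Lf z)) z := by
    let d : ℕ → ℂ := fun n => a n / n
    have hd : ∀ z, ‖z‖ < 1 → HasSum (fun n => d n * z ^ n) (z * φ z) := by
      intro z hz
      by_cases hzz : z = 0
      · rw [hzz, zero_mul]
        have := hasSum_single (f := fun n => d n * (0:ℂ) ^ n) 0 (by intro n hn; simp [hn])
        simpa [d] using this
      · rw [ps_shift (by simp [d]) hzz rfl]
        simpa [d, hc] using hφs z hz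
    obtain ⟨d1, d2⟩ := ps_deriv hd
    intro z hz
    have h1 := (d1.differentiableAt (isOpen_ball.mem_nhds (by simpa using hz))).hasDerivAt
    have h2 := d2 z hz
    have h3 : HasSum (fun n : ℕ => ((n:ℂ) + 1) * d (n+1) * z ^ n) (Complex.exp (Lf z)) := by
      refine (sf z hz).congr_fun ?_
      intro n
      have : ((n:ℂ) + 1) ≠ 0 := by exact_mod_cast Nat.succ_ne_zero n
      simp only [d]; push_cast
      field_simp
    rw [h2.unique h3] at h1
    exact h1
  obtain ⟨s, hs1', hs2⟩ := exists_between hz1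
  have hn0 : 0 < ‖z0‖ := norm_pos_iff.2 hz0
  have hs : 0 < s := hn0.trans hs1'
  have hsR : s⁻¹ < ‖z0‖⁻¹ := by gcongr
  have hmul : ∀ y : ℂ, ‖y‖ < ‖z0‖⁻¹ → ‖z0 * y‖ < 1 := by
    intro y hy
    rw [norm_mul]
    calc ‖z0‖ * ‖y‖ < ‖z0‖ * ‖z0‖⁻¹ := by gcongr
      _ = 1 := by field_simp
  obtain ⟨lam, hlam⟩ := exists_lam (Ψ := fun y => φ (z0 * y)) hs hsR (by
    apply hφd.comp (by fun_prop)
    intro y hy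
    simpa using hmul y (by simpa using hy))
  -- coefficients
  have hcoef : (fun n => lam (XX s ^ n)) = fun n => c n * z0 ^ n := by
    refine ps_unique (R := s⁻¹) (F := fun y => φ (z0 * y)) (by positivity) ?_ ?_
    · intro y hy
      have := (uu_hasSum hs hy).mapL lam
      rw [hlam y hy] at this
      simpa [mul_comm] using this
    · intro y hy
      refine (hφs (z0 * y) (hmul y (hy.trans hsR))).congr_fun ?_
      intro n; simp only [mul_pow]; ring
  have hcoef' : ∀ n, lam (XX s ^ n) = c n * z0 ^ n := fun n => congrFun hcoef n
  have happ : ∀ {b : ℕ → ℂ} {v : ℂ → ℂ}, (∀ z, ‖z‖ < 1 → HasSum (fun n => b n * z ^ n) (v z)) →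
      HasSum (fun n => b n * (c n * z0 ^ n)) (lam (toA s v)) := by
    intro b v hb
    have := (toA_hasSum hs hs2 hb).mapL lam
    simpa [hcoef'] using this
  -- RSS
  have hzs : ∀ y : ℂ, ‖y‖ < s⁻¹ → ‖z0 * y‖ < 1 := fun y hy => hmul y (hy.trans hsR)
  have hL0d : ∀ y : ℂ, ‖y‖ < s⁻¹ → HasDerivAt (fun y => Lf (z0 * y)) (deriv Lf (z0 * y) * z0) y := by
    intro y hy
    have h1 : HasDerivAt Lf (deriv Lf (z0 * y)) (z0 * y) :=
      (hLf.differentiableAt (isOpen_ball.mem_nhds (by simpa using hzs y hy))).hasDerivAt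
    have h2 : HasDerivAt (fun y => z0 * y) (z0 * 1) y := (hasDerivAt_id y).const_mul z0
    rw [mul_one] at h2
    exact h1.comp y h2
  obtain ⟨r1, r2⟩ := RSS hs hs2 lam (L0 := fun y => Lf (z0 * y)) (L := fun z => LA z / 2)
    (fun y hy => (hL0d y (by simpa using hy)).differentiableAt.differentiableWithinAt)
    (by
      intro y hy
      rw [(hL0d y hy).deriv]
      have e1 := hLPf (z0 * y) (hzs y hy)
      have e2 : y * (deriv Lf (z0 * y) * z0) = Pf (z0 * y) - 1 := by rw [← e1]; ring
      have := hpos _ (hPf (z0 * y) (hzs y hy))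
      rw [e2]; simp; linarith)
    (by
      intro y hy
      have h2 : HasDerivAt (fun y => z0 * y) (z0 * 1) y := (hasDerivAt_id y).const_mul z0
      have h1 := ((hφ1 (z0 * y) (hzs y hy)).comp y h2).const_mul z0⁻¹
      have h3 : z0⁻¹ * (Complex.exp (Lf (z0 * y)) * (z0 * 1)) = Complex.exp (Lf (z0 * y)) := by
        field_simp
      rw [h3] at h1
      refine h1.congr_of_eventuallyEq ?_
      filter_upwards [isOpen_ball.mem_nhds (show y ∈ ball (0:ℂ) s⁻¹ by simpa using hy)] with w hw
      rw [hlam w (by simpa using hw)]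
      simp only [Function.comp]
      field_simp)
    (hLA.div_const 2)
    (by
      intro z hz
      have hd : HasDerivAt LA (deriv LA z) z :=
        (hLA.differentiableAt (isOpen_ball.mem_nhds (by simpa using hz))).hasDerivAt
      rw [(hd.div_const 2).deriv]
      have e1 := hLPA z hz
      have e2 : z * (deriv LA z / 2) = ((1/2:ℝ):ℂ) * (PA z - 1) := by rw [← e1]; push_cast; ring
      have := hpos _ (hPA z hz)
      rw [e2, Complex.re_ofReal_mul]; simp; linarith)
  have hsub : closedBall (0:ℂ) s ⊆ ball 0 1 := closedBall_subset_ball hs2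
  have eG : toA s (fun z => Complex.exp (LA z / 2)) ^ 2 = toA s (fun z => Complex.exp (LA z)) := by
    ext ζ
    rw [toA_apply (hLA.cexp.continuousOn.mono hsub), ContinuousMap.pow_apply,
      toA_apply ((hLA.div_const 2).cexp.continuousOn.mono hsub), ← Complex.exp_nat_mul]
    congr 1; push_cast; ring
  rw [eG] at r1 r2
  set G := toA s (fun z => Complex.exp (LA z)) with hG
  have eGp : ∀ p, DifferentiableOn ℂ p (ball 0 1) →
      G * toA s p = toA s (fun z => Complex.exp (LA z) * p z) := by
    intro p hp
    ext ζ
    rw [ContinuousMap.mul_apply, hG, toA_apply (hLA.cexp.continuousOn.mono hsub),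
      toA_apply (hp.continuousOn.mono hsub),
      toA_apply ((hLA.cexp.continuousOn.mono hsub).fun_mul (hp.continuousOn.mono hsub))]
  have eA' : G * toA s PA = toA s (deriv A) := by
    rw [eGp _ hPAd]
    ext ζ
    have hζ : ‖(ζ:ℂ)‖ < 1 := (mem_closedBall_zero_iff.1 ζ.2).trans_lt hs2
    rw [toA_apply ((hLA.cexp.continuousOn.mono hsub).fun_mul (hPAd.continuousOn.mono hsub)),
      toA_apply ((hA.1.1.deriv isOpen_D).continuousOn.mono hsub), hdA _ hζ]
  refine ⟨z0 * lam G, lam (toA s (deriv A)), ?_, ?_, mul_ne_zero hz0 r1, ?_⟩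
  · rw [ps_shift (by simp) hz0 rfl]
    refine (happ sA).congr_fun ?_
    intro n
    simp only [hc]; push_cast
    ring
  · refine (happ sdA).congr_fun ?_
    intro n
    simp only [hc]; push_cast
    ring
  · have eq0 : z0 * lam (toA s (deriv A)) / (z0 * lam G) = lam (G * toA s PA) / lam G := by
      rw [← eA']; field_simp
    rw [eq0]
    by_contra hcon
    obtain ⟨l, hl⟩ := RCLike.geometric_hahn_banach_open_point (𝕜 := ℂ) hconv
      (hψ.open_image subset_rfl isOpen_D) hcon
    set Q0 := lam (G * toA s PA) / lam G with hQ0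
    have hl' : ∀ w, l w = w * l 1 := by
      intro w
      have := l.map_smul w 1
      simpa using this
    have hpd : DifferentiableOn ℂ (fun z => l 1 * Q0 - l 1 * PA z) (ball 0 1) :=
      (hPAd.const_mul _).const_sub _
    have := r2 (fun z => l 1 * Q0 - l 1 * PA z) hpd (by
      intro z hz
      have := hl _ (hPA z hz)
      rw [hl', hl' Q0] at this
      simp only [RCLike.re_to_complex] at this
      rw [Complex.sub_re, mul_comm (l 1), mul_comm (l 1)]
      linarith)
    have e : toA s (fun z => l 1 * Q0 - l 1 * PA z) = (l 1 * Q0) • (1 : AA s) - (l 1) • toA s PA := by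
      ext ζ
      rw [toA_apply (hpd.continuousOn.mono hsub)]
      simp [toA_apply (hPAd.continuousOn.mono hsub)]
    have e2 : lam (G * toA s PA) = Q0 * lam G := by rw [hQ0]; field_simp
    rw [e, mul_sub, mul_smul_comm, mul_smul_comm, mul_one, map_sub, map_smul, map_smul, e2] at this
    simp at this
    rw [show l 1 * Q0 * lam G - l 1 * (Q0 * lam G) = 0 by ring] at this
    simp at this

lemma mainLemma {ψ : ℂ → ℂ} (hψ : MaMinda ψ) (hconv : Convex ℝ (ψ '' 𝔻))
    {f A : ℂ → ℂ} {a α : ℕ → ℂ} (hf : StarlikeMM ψ f) (hA : StarlikeMM ψ A)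
    (ha0 : a 0 = 0) (ha1 : a 1 = 1) (hα0 : α 0 = 0) (hα1 : α 1 = 1)
    (hfa : ∀ z ∈ 𝔻, HasSum (fun n => a n * z^n) (f z))
    (hAα : ∀ z ∈ 𝔻, HasSum (fun n => α n * z^n) (A z)) :
    ∃ k : ℂ → ℂ, StarlikeMM ψ k ∧ ∀ z ∈ 𝔻, HasSum (fun n => a n * α n / n * z ^ n) (k z) := by
  have hcore := fun (z : ℂ) (h0 : z ≠ 0) (h1 : ‖z‖ < 1) =>
    core hψ hconv hf hA ha0 ha1 hα0 hα1 (fun z hz => hfa z (mem_D.2 hz))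
      (fun z hz => hAα z (mem_D.2 hz)) h0 h1
  set κ : ℕ → ℂ := fun n => a n * α n / n with hκ
  have hκ0 : κ 0 = 0 := by simp [hκ]
  have hκ1 : κ 1 = 1 := by simp [hκ, ha1, hα1]
  set k : ℂ → ℂ := fun z => ∑' n, κ n * z ^ n with hk
  have hks : ∀ z, ‖z‖ < 1 → HasSum (fun n => κ n * z ^ n) (k z) := by
    intro z hz
    by_cases h0 : z = 0
    · apply Summable.hasSum
      rw [h0]
      exact (hasSum_single (f := fun n => κ n * (0:ℂ) ^ n) 0 (by intro n hn; simp [hn])).summable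
    · obtain ⟨K, K', h1, -⟩ := hcore z h0 hz
      exact h1.summable.hasSum
  obtain ⟨kd, kd'⟩ := ps_deriv hks
  have k0 : k 0 = 0 := by
    have := hasSum_single (f := fun n => κ n * (0:ℂ) ^ n) 0 (by intro n hn; simp [hn])
    simpa [hκ0] using (hks 0 (by simp)).unique this
  have k1 : deriv k 0 = 1 := by
    have := hasSum_single (f := fun n : ℕ => ((n:ℂ) + 1) * κ (n+1) * (0:ℂ) ^ n) 0
      (by intro n hn; simp [hn])
    simpa [hκ1] using (kd' 0 (by simp)).unique this
  have kne : ∀ z, ‖z‖ < 1 → z ≠ 0 → k z ≠ 0 ∧ z * deriv k z / k z ∈ ψ '' 𝔻 := by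
    intro z hz h0
    obtain ⟨K, K', h1, h2, h3, h4⟩ := hcore z h0 hz
    rw [(hks z hz).unique h1, (kd' z hz).unique h2]
    exact ⟨h3, h4⟩
  refine ⟨k, ⟨⟨kd, k0, k1⟩, fun z hz h0 => (kne z (mem_D.1 hz) h0).1, ?_⟩,
    fun z hz => hks z (mem_D.1 hz)⟩
  obtain ⟨φ, hφd, hφi⟩ := hψ.inverse
  have m0 : (0:ℂ) ∈ 𝔻 := by simp [mem_D]
  set q : ℂ → ℂ := fun z => if z = 0 then 1 else z * deriv k z / k z with hq
  have hqm : ∀ z ∈ 𝔻, q z ∈ ψ '' 𝔻 := by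
    intro z hz
    by_cases h0 : z = 0
    · simp only [hq, h0, if_true]
      exact ⟨0, m0, hψ.2.2.2.1⟩
    · simp only [hq, h0, if_false]
      exact (kne z (mem_D.1 hz) h0).2
  have hds : DifferentiableOn ℂ (dslope k 0) 𝔻 :=
    (Complex.differentiableOn_dslope (isOpen_D.mem_nhds m0)).2 kd
  have hke : ∀ z, k z = z * dslope k 0 z := by
    intro z
    have := sub_smul_dslope k 0 z
    rw [k0] at this
    simpa using this.symm
  have hdne : ∀ z ∈ 𝔻, dslope k 0 z ≠ 0 := by
    intro z hz
    by_cases hz0 : z = 0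
    · rw [hz0, dslope_same, k1]; exact one_ne_zero
    · intro h
      apply (kne z (mem_D.1 hz) hz0).1
      rw [hke, h, mul_zero]
  have hqd : DifferentiableOn ℂ q 𝔻 := by
    have : DifferentiableOn ℂ (fun z => deriv k z / dslope k 0 z) 𝔻 :=
      (kd.deriv isOpen_ball).fun_div hds hdne
    refine this.congr ?_
    intro z hz
    by_cases h0 : z = 0
    · simp [hq, h0, k1]
    · simp only [hq, h0, if_false]
      have := hdne z hz
      rw [hke z]
      field_simp
  refine ⟨fun z => φ (q z), hφd.comp hqd hqm, ?_, ?_, ?_⟩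
  · have : q 0 = ψ 0 := by simp [hq, hψ.2.2.2.1]
    simp only [this]
    exact hφi 0 m0
  · intro z hz
    obtain ⟨v, hv, hve⟩ := hqm z hz
    simp only [← hve, hφi v hv]; exact hv
  · intro z hz
    obtain ⟨v, hv, hve⟩ := hqm z hz
    change q z = ψ (φ (q z))
    rw [← hve, hφi v hv]

lemma StarlikeMM.congr {ψ f g : ℂ → ℂ} (hf : StarlikeMM ψ f) (h : ∀ z ∈ 𝔻, g z = f z) :
    StarlikeMM ψ g := by
  have hd : ∀ z ∈ 𝔻, deriv g z = deriv f z := by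
    intro z hz
    apply Filter.EventuallyEq.deriv_eq
    filter_upwards [isOpen_D.mem_nhds hz] with w hw using h w hw
  have m0 : (0:ℂ) ∈ 𝔻 := by simp [mem_D]
  obtain ⟨⟨h1, h2, h3⟩, h4, ω, w1, w2, w3, w4⟩ := hf
  refine ⟨⟨h1.congr h, by rw [h 0 m0, h2], by rw [hd 0 m0, h3]⟩, ?_, ω, w1, w2, w3, ?_⟩
  · intro z hz h0
    rw [h z hz]; exact h4 z hz h0
  · intro z hz
    simp only [h z hz, hd z hz]
    exact w4 z hz

lemma F_hasSum {w : ℂ} (hw : ‖w‖ < 1) :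
    HasSum (fun n : ℕ => (n:ℂ)^2 * w ^ n) (w * (1 + w) / (1 - w)^3) := by
  have hne : 1 - w ≠ 0 := by
    intro h
    rw [← sub_eq_zero.1 h] at hw; simp at hw
  have h2 := hasSum_choose_mul_geometric_of_norm_lt_one 2 hw
  have h1 := hasSum_choose_mul_geometric_of_norm_lt_one 1 hw
  have h0 := hasSum_choose_mul_geometric_of_norm_lt_one 0 hw
  have h3 := ((h2.mul_left 2).sub (h1.mul_left 3)).add h0
  have e : w * (1 + w) / (1 - w)^3 =
      2 * (1 / (1 - w)^(2+1)) - 3 * (1 / (1 - w)^(1+1)) + 1 / (1 - w)^(0+1) := by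
    field_simp; ring
  rw [e]
  refine h3.congr_fun ?_
  intro n
  have c2 : ((n+2).choose 2 : ℂ) = (n+2)*(n+1)/2 := by
    rw [Nat.cast_choose_two]; push_cast; ring
  simp only [c2]
  simp
  ring

theorem stmt7 (ψ : ℂ → ℂ) (hψ : MaMinda ψ) (hconv : Convex ℝ (ψ '' 𝔻))
    (r : ℝ) (hr0 : 0 < r) (hr1 : r ≤ 1)
    (hF : StarlikeMM ψ
      (fun z => (((r:ℂ)*z) * (1 + (r:ℂ)*z) / (1 - (r:ℂ)*z)^3) / (r:ℂ)))
    (f g h : ℂ → ℂ) (a b : ℕ → ℂ)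
    (hfS : StarlikeMM ψ f) (hgS : StarlikeMM ψ g)
    (ha0 : a 0 = 0) (ha1 : a 1 = 1) (hb0 : b 0 = 0) (hb1 : b 1 = 1)
    (hfa : ∀ z ∈ 𝔻, HasSum (fun n => a n * z^n) (f z))
    (hgb : ∀ z ∈ 𝔻, HasSum (fun n => b n * z^n) (g z))
    (hhab : ∀ z ∈ 𝔻, HasSum (fun n => a n * b n * z^n) (h z)) :
    StarlikeMM ψ (fun z => h ((r:ℂ)*z) / (r:ℂ)) := by
  have hrC : (r:ℂ) ≠ 0 := by exact_mod_cast hr0.ne'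
  have hrz : ∀ z ∈ 𝔻, (r:ℂ) * z ∈ 𝔻 := by
    intro z hz
    rw [mem_D] at *
    rw [norm_mul, Complex.norm_real, Real.norm_of_nonneg hr0.le]
    calc r * ‖z‖ ≤ 1 * ‖z‖ := by gcongr
      _ < 1 := by linarith
  have hFs : ∀ z ∈ 𝔻, HasSum (fun n : ℕ => ((n:ℂ)^2 * (r:ℂ)^n / r) * z ^ n)
      ((((r:ℂ)*z) * (1 + (r:ℂ)*z) / (1 - (r:ℂ)*z)^3) / (r:ℂ)) := by
    intro z hz
    refine ((F_hasSum (mem_D.1 (hrz z hz))).div_const (r:ℂ)).congr_fun ?_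
    intro n
    simp only [mul_pow]; ring
  obtain ⟨k1, hk1, hk1s⟩ := mainLemma hψ hconv hgS hF hb0 hb1 (by simp) (by simp [hrC]) hgb hFs
  obtain ⟨k2, hk2, hk2s⟩ := mainLemma hψ hconv hfS hk1 ha0 ha1 (by simp) (by simp [hb1, hrC]) hfa hk1s
  refine hk2.congr ?_
  intro z hz
  refine HasSum.unique ?_ (hk2s z hz)
  refine ((hhab _ (hrz z hz)).div_const (r:ℂ)).congr_fun ?_
  intro n
  rcases Nat.eq_zero_or_pos n with rfl | hn
  · simp [ha0]
  · have : (n:ℂ) ≠ 0 := by exact_mod_cast hn.ne'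
    simp only [mul_pow]
    field_simp
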